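/- arXiv:1503.03111 — 3 statements merged into one kernel-verified Lean document; each statement's English description precedes it below -/
import Mathlib

section
/- Let B² denote the closed unit disk in ℝ². Then coin(B²) = 14, and every convex body K ⊆ ℝ² satisfies coin(K) ≤ 14; thus the circular disk maximizes the covering index among planar convex bodies. -/
open Set Pointwise

section Defs

variable {V : Type*} [NormedAddCommGroup V] [NormedSpace ℝ V]

/-- A convex body: compact, convex, with nonempty interior. -/
def IsConvexBody (K : Set V) : Prop :=
  IsCompact K ∧ Convex ℝ K ∧ (interior K).Nonempty

/-- `K` can be covered by `m` homothets of ratio `lam`. -/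
def CoversWith (K : Set V) (lam : ℝ) (m : ℕ) : Prop :=
  ∃ t : Fin m → V, K ⊆ ⋃ i, (fun x => lam • x + t i) '' K

/-- The `m`-covering number `γ_m(K)`. -/
noncomputable def gammaC (m : ℕ) (K : Set V) : ℝ :=
  sInf {lam : ℝ | 0 < lam ∧ CoversWith K lam m}

/-- The covering index `coin(K)`. -/
noncomputable def coin (K : Set V) : ℝ :=
  sInf {r : ℝ | ∃ m : ℕ, 0 < m ∧ gammaC m K ≤ 1 / 2 ∧ r = (m : ℝ) / (1 - gammaC m K)}

/-- The weak covering index `wcoin(K)`. -/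
noncomputable def wcoin (K : Set V) : ℝ :=
  sInf {r : ℝ | ∃ m : ℕ, 0 < m ∧ gammaC m K < 1 ∧ r = (m : ℝ) / (1 - gammaC m K)}

/-- `N_λ(K)`: the least number of translates of `λ • K` needed to cover `K`. -/
noncomputable def covN (lam : ℝ) (K : Set V) : ℕ :=
  sInf {n : ℕ | CoversWith K lam n}

/-- A convex body is tightly covered if for every `0 < λ < 1` it contains `N_λ(K)`
points no two of which lie in a common homothet `λ • K + t`. -/
def TightlyCovered (K : Set V) : Prop :=
  ∀ lam : ℝ, 0 < lam → lam < 1 →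
    ∃ p : Fin (covN lam K) → V, (∀ i, p i ∈ K) ∧
      ∀ i j, i ≠ j → ∀ t : V,
        ¬(p i ∈ (fun x => lam • x + t) '' K ∧ p j ∈ (fun x => lam • x + t) '' K)

/-- The covering parameter `C(K)` of Swanepoel. -/
noncomputable def covParam (K : Set V) : ℝ :=
  sInf {r : ℝ | ∃ k : ℕ, ∃ lam : Fin k → ℝ, ∃ t : Fin k → V,
    (∀ i, 0 < lam i ∧ lam i < 1) ∧
    (K ⊆ ⋃ i, (fun x => lam i • x + t i) '' K) ∧
    r = ∑ i, 1 / (1 - lam i)}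

/-- The (multiplicative) Banach–Mazur distance. -/
noncomputable def distBM {d : ℕ} (K L : Set (Fin d → ℝ)) : ℝ :=
  sInf {δ : ℝ | 1 ≤ δ ∧ ∃ T : (Fin d → ℝ) ≃ₗ[ℝ] (Fin d → ℝ), ∃ a ∈ K, ∃ b ∈ L,
    (fun x => x - b) '' L ⊆ T '' ((fun x => x - a) '' K) ∧
    T '' ((fun x => x - a) '' K) ⊆ δ • ((fun x => x - b) '' L)}

end Defs

/-!
Every planar convex body `K` is covered by seven copies of ratio `1 / 2`, so `coin K ≤ 14`. For a
direction `u`, consider three chords of `K` parallel to `u`: two of equal length, and one of twice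
that length halfway between them. Choose them so that the hexagon they span has maximal area. The
triple for `-u` is the one for `u` upside down, so by connectedness of the circle some direction
has a maximal triple whose hexagon is an affine image of the regular hexagon. Maximality of the
area then confines `K` to the hexagram of that hexagon, and for a convex set between a regular
hexagon and its hexagram one central half-size copy and six around it suffice.

For the disk, compare arcs. If `m` disks of radius `γ ≤ 1 / 2` cover the unit disk, the one
containing the center meets the unit circle in at most one point, and each of the others in an arc
of angle at most `2 * arcsin γ`. Hence `π ≤ (m - 1) * arcsin γ`, and since
`arcsin γ ≤ π / 3 * γ` for `γ ≤ 1 / 2` this yields `m / (1 - γ) ≥ 14`.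
-/

open Metric Filter Topology Module
open scoped Real

section Covering

variable {V W : Type*} [NormedAddCommGroup V] [NormedSpace ℝ V]
  [NormedAddCommGroup W] [NormedSpace ℝ W] {K : Set V} {lam : ℝ} {m : ℕ}

lemma CoversWith.image (h : CoversWith K lam m) (f : V →ᵃ[ℝ] W) : CoversWith (f '' K) lam m := by
  obtain ⟨t, ht⟩ := h
  refine ⟨fun i => f (t i) - lam • f 0, ?_⟩
  rintro _ ⟨x, hx, rfl⟩
  obtain ⟨i, y, hy, rfl⟩ := mem_iUnion.1 (ht hx)
  refine mem_iUnion.2 ⟨i, f y, mem_image_of_mem f hy, ?_⟩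
  have hf (z : V) : f z = f.linear z + f 0 := congrFun f.decomp z
  change lam • f y + (f (t i) - lam • f 0) = f (lam • y + t i)
  rw [hf y, hf (t i), hf (lam • y + t i), map_add, map_smul]
  module

lemma coversWith_image_iff (e : V ≃ᵃ[ℝ] W) : CoversWith (e '' K) lam m ↔ CoversWith K lam m := by
  refine ⟨fun h => ?_, fun h => h.image e.toAffineMap⟩
  simpa [image_image] using h.image e.symm.toAffineMap

lemma gammaC_image (e : V ≃ᵃ[ℝ] W) (m : ℕ) (K : Set V) : gammaC m (e '' K) = gammaC m K := by
  simp only [gammaC, coversWith_image_iff]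

lemma coin_image (e : V ≃ᵃ[ℝ] W) (K : Set V) : coin (e '' K) = coin K := by
  simp only [coin, gammaC_image]

lemma coversWith_one (K : Set V) (hm : 0 < m) : CoversWith K 1 m :=
  ⟨0, fun x hx => mem_iUnion.2 ⟨⟨0, hm⟩, x, hx, by simp⟩⟩

lemma gammaC_nonneg (m : ℕ) (K : Set V) : 0 ≤ gammaC m K :=
  Real.sInf_nonneg fun _ h => h.1.le

lemma gammaC_le_of_coversWith (hlam : 0 < lam) (h : CoversWith K lam m) : gammaC m K ≤ lam :=
  csInf_le ⟨0, fun _ h => h.1.le⟩ ⟨hlam, h⟩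

lemma frequently_coversWith_nhds_gammaC (K : Set V) (hm : 0 < m) :
    ∃ᶠ lam in 𝓝 (gammaC m K), 0 < lam ∧ CoversWith K lam m :=
  mem_closure_iff_frequently.1 <|
    csInf_mem_closure ⟨1, one_pos, coversWith_one K hm⟩ ⟨0, fun _ h => h.1.le⟩

lemma coin_le_of_coversWith (hm : 0 < m) (hlam : 0 < lam) (hlam' : lam ≤ 1 / 2)
    (h : CoversWith K lam m) : coin K ≤ m / (1 - lam) := by
  have hγ : gammaC m K ≤ lam := gammaC_le_of_coversWith hlam h
  calc coin K ≤ m / (1 - gammaC m K) := by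
        refine csInf_le ⟨0, ?_⟩ ⟨m, hm, hγ.trans hlam', rfl⟩
        rintro _ ⟨k, -, hk, rfl⟩
        exact div_nonneg k.cast_nonneg (by linarith)
    _ ≤ m / (1 - lam) := by gcongr; linarith

lemma le_coin {b : ℝ} (hne : ∃ m, 0 < m ∧ gammaC m K ≤ 1 / 2)
    (h : ∀ m : ℕ, 0 < m → gammaC m K ≤ 1 / 2 → b ≤ m / (1 - gammaC m K)) : b ≤ coin K := by
  obtain ⟨k, hk, hγ⟩ := hne
  refine le_csInf ⟨_, k, hk, hγ, rfl⟩ ?_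
  rintro _ ⟨m, hm, hm', rfl⟩
  exact h m hm hm'

lemma IsConvexBody.image (hK : IsConvexBody K) (e : V ≃L[ℝ] W) : IsConvexBody (e '' K) := by
  obtain ⟨hcomp, hconv, hint⟩ := hK
  have hinterior : e '' interior K = interior (e '' K) := e.toHomeomorph.image_interior K
  exact ⟨hcomp.image e.continuous, hconv.linear_image (e : V →ₗ[ℝ] W),
    hinterior ▸ hint.image e⟩

end Covering

section Disk

lemma norm_coe_addCircle_eq_arccos_cos (x : ℝ) :
    ‖(x : AddCircle (2 * π))‖ = Real.arccos (Real.cos x) := by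
  have hle := AddCircle.norm_le_half_period (2 * π) (x := (x : AddCircle (2 * π))) (by positivity)
  rw [abs_of_pos (by positivity)] at hle
  rw [AddCircle.norm_eq] at hle ⊢
  rw [← Real.cos_sub_int_mul_two_pi x (round ((2 * π)⁻¹ * x)), ← Real.cos_abs,
    Real.arccos_cos (abs_nonneg _) (by linarith)]

lemma period_le_sum_of_iUnion_closedBall_eq_univ {T : ℝ} [Fact (0 < T)] {ι : Type*}
    [Fintype ι] (c : ι → AddCircle T) {r : ι → ℝ} (hr : ∀ i, 0 ≤ r i)
    (h : ⋃ i, closedBall (c i) (r i) = univ) : T ≤ ∑ i, 2 * r i := by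
  rw [← ENNReal.ofReal_le_ofReal_iff (Finset.sum_nonneg fun i _ => by linarith [hr i])]
  calc ENNReal.ofReal T = MeasureTheory.volume (⋃ i, closedBall (c i) (r i)) := by
        rw [h, AddCircle.measure_univ]
    _ ≤ ∑ i, MeasureTheory.volume (closedBall (c i) (r i)) := by
        simpa using MeasureTheory.measure_iUnion_le (μ := MeasureTheory.volume)
          fun i => closedBall (c i) (r i)
    _ ≤ ∑ i, ENNReal.ofReal (2 * r i) := by
        gcongr with i
        rw [AddCircle.volume_closedBall]
        exact ENNReal.ofReal_le_ofReal (min_le_right _ _)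
    _ = ENNReal.ofReal (∑ i, 2 * r i) :=
        (ENNReal.ofReal_sum_of_nonneg fun i _ => by linarith [hr i]).symm

variable {y lam : ℝ} {z : ℂ}

lemma one_add_sq_sub_sq_le_cos_sub_arg (h : ‖Complex.exp (y * Complex.I) - z‖ ≤ lam) :
    1 + ‖z‖ ^ 2 - lam ^ 2 ≤ 2 * ‖z‖ * Real.cos (y - z.arg) := by
  have hdist : ‖Complex.exp (y * Complex.I) - z‖ ^ 2
      = 1 + ‖z‖ ^ 2 - 2 * ‖z‖ * Real.cos (y - z.arg) := by
    rw [Complex.sq_norm, Complex.normSq_apply, Complex.sub_re, Complex.sub_im,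
      Complex.exp_ofReal_mul_I_re, Complex.exp_ofReal_mul_I_im, ← Complex.norm_mul_cos_arg z,
      ← Complex.norm_mul_sin_arg z, Real.cos_sub]
    linear_combination Real.sin_sq_add_cos_sq y + ‖z‖ ^ 2 * Real.sin_sq_add_cos_sq z.arg
  have := pow_le_pow_left₀ (norm_nonneg _) h 2
  linarith

lemma norm_pos_of_norm_exp_sub_le (hlam : lam < 1)
    (h : ‖Complex.exp (y * Complex.I) - z‖ ≤ lam) : 0 < ‖z‖ := by
  have := norm_sub_norm_le (Complex.exp (y * Complex.I)) z
  rw [Complex.norm_exp_ofReal_mul_I] at this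
  linarith

lemma norm_coe_sub_arg_le_arcsin (hlam : 0 ≤ lam) (hlam' : lam < 1)
    (h : ‖Complex.exp (y * Complex.I) - z‖ ≤ lam) :
    ‖((y - z.arg : ℝ) : AddCircle (2 * π))‖ ≤ Real.arcsin lam := by
  rw [norm_coe_addCircle_eq_arccos_cos, Real.arcsin_eq_arccos hlam]
  refine Real.arccos_le_arccos (le_of_mul_le_mul_left (a := 2 * ‖z‖) ?_
    (by linarith [norm_pos_of_norm_exp_sub_le hlam' h]))
  have hsq : √(1 - lam ^ 2) ^ 2 = 1 - lam ^ 2 := Real.sq_sqrt (by nlinarith)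
  linarith [two_mul_le_add_sq ‖z‖ √(1 - lam ^ 2), one_add_sq_sub_sq_le_cos_sub_arg h]

-- The covering number may not be attained, so radii slightly above `1 / 2` matter. The law of
-- cosines gives the bound `1 / (2 * lam)` on the cosine; its tangent `2 - 2 * lam` at `1 / 2`
-- keeps the arc continuous in `lam`, and trivial for `lam ≤ 1 / 2`.
lemma norm_coe_sub_arg_le_arccos (hlam : lam ≤ 2 / 3) (hz : ‖z‖ ≤ lam)
    (h : ‖Complex.exp (y * Complex.I) - z‖ ≤ lam) :
    ‖((y - z.arg : ℝ) : AddCircle (2 * π))‖ ≤ Real.arccos (2 - 2 * lam) := by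
  rw [norm_coe_addCircle_eq_arccos_cos]
  refine Real.arccos_le_arccos (le_of_mul_le_mul_left (a := 2 * ‖z‖) ?_
    (by linarith [norm_pos_of_norm_exp_sub_le (by linarith) h]))
  have hmono : 0 ≤ (lam - ‖z‖) * (4 * (1 - lam) - (‖z‖ + lam)) :=
    mul_nonneg (by linarith) (by linarith)
  nlinarith [sq_nonneg (1 - 2 * lam), one_add_sq_sub_sq_le_cos_sub_arg h]

lemma exists_norm_sub_le_of_closedBall_subset {V : Type*} [NormedAddCommGroup V]
    [NormedSpace ℝ V] {ι : Type*} (hlam : 0 ≤ lam) {t : ι → V}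
    (ht : closedBall (0 : V) 1 ⊆ ⋃ i, (fun x => lam • x + t i) '' closedBall 0 1) {x : V}
    (hx : ‖x‖ ≤ 1) : ∃ i, ‖x - t i‖ ≤ lam := by
  obtain ⟨i, w, hw, rfl⟩ := mem_iUnion.1 (ht (mem_closedBall_zero_iff.2 hx))
  refine ⟨i, ?_⟩
  rw [add_sub_cancel_right, norm_smul, Real.norm_of_nonneg hlam]
  exact mul_le_of_le_one_right hlam (mem_closedBall_zero_iff.1 hw)

lemma pi_le_of_coversWith_unitDisk {m : ℕ} (hlam : 0 ≤ lam) (hlam' : lam ≤ 2 / 3)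
    (h : CoversWith (closedBall (0 : ℂ) 1) lam m) :
    π ≤ (m - 1) * Real.arcsin lam + Real.arccos (2 - 2 * lam) := by
  obtain ⟨t, ht⟩ := h
  obtain ⟨i₀, hi₀⟩ := exists_norm_sub_le_of_closedBall_subset hlam ht (x := 0) (by simp)
  rw [zero_sub, norm_neg] at hi₀
  let r : Fin m → ℝ := fun i => if i = i₀ then Real.arccos (2 - 2 * lam) else Real.arcsin lam
  have hr i : 0 ≤ r i := by
    unfold r
    split_ifs
    exacts [Real.arccos_nonneg _, Real.arcsin_nonneg.2 hlam]
  have : Fact (0 < 2 * π) := ⟨Real.two_pi_pos⟩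
  have hcover : ⋃ i, closedBall ((t i).arg : AddCircle (2 * π)) (r i) = univ := by
    refine eq_univ_of_forall fun y => ?_
    induction y using QuotientAddGroup.induction_on with | _ y
    obtain ⟨i, hi⟩ := exists_norm_sub_le_of_closedBall_subset hlam ht
      (x := Complex.exp (y * Complex.I)) (Complex.norm_exp_ofReal_mul_I y).le
    refine mem_iUnion.2 ⟨i, ?_⟩
    rw [mem_closedBall, dist_eq_norm]
    change ‖((y - (t i).arg : ℝ) : AddCircle (2 * π))‖ ≤ if i = i₀ then _ else _
    split_ifs with h
    · exact norm_coe_sub_arg_le_arccos hlam' (h ▸ hi₀) hi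
    · exact norm_coe_sub_arg_le_arcsin hlam (by linarith) hi
  have hsum : ∑ i, r i = (m - 1) * Real.arcsin lam + Real.arccos (2 - 2 * lam) := by
    have hm : ((m - 1 : ℕ) : ℝ) = m - 1 := Nat.cast_pred i₀.pos
    simp [r, Finset.sum_ite, Finset.filter_eq', Finset.filter_ne', hm, add_comm]
  have := period_le_sum_of_iUnion_closedBall_eq_univ _ hr hcover
  rw [← Finset.mul_sum, hsum] at this
  linarith

lemma pi_le_of_gammaC_unitDisk_le_half {m : ℕ} (hm : 0 < m)
    (hγ : gammaC m (closedBall (0 : ℂ) 1) ≤ 1 / 2) :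
    π ≤ (m - 1) * Real.arcsin (gammaC m (closedBall (0 : ℂ) 1)) := by
  by_contra! hlt
  set γ := gammaC m (closedBall (0 : ℂ) 1)
  let f : ℝ → ℝ := fun lam => (m - 1) * Real.arcsin lam + Real.arccos (2 - 2 * lam)
  have hf : Continuous f := by fun_prop
  have hfγ : f γ < π := by
    simpa [f, Real.arccos_of_one_le (show 1 ≤ 2 - 2 * γ by linarith)] using hlt
  have hnear : ∀ᶠ lam in 𝓝 γ, f lam < π ∧ lam < 2 / 3 :=
    (hf.continuousAt.eventually_lt_const hfγ).and (eventually_lt_nhds (by linarith))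
  obtain ⟨lam, ⟨hlam, hcov⟩, hflam, hlam'⟩ :=
    ((frequently_coversWith_nhds_gammaC _ hm).and_eventually hnear).exists
  exact hflam.not_ge (pi_le_of_coversWith_unitDisk hlam.le hlam'.le hcov)

lemma arcsin_le_pi_div_three_mul {x : ℝ} (hx : 0 ≤ x) (hx' : x ≤ 1 / 2) :
    Real.arcsin x ≤ π / 3 * x := by
  have hsin : x ≤ Real.sin (π / 3 * x) := by
    have : (1 - 2 * x) • Real.sin 0 + (2 * x) • Real.sin (π / 6)
        ≤ Real.sin ((1 - 2 * x) • 0 + (2 * x) • (π / 6)) :=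
      strictConcaveOn_sin_Icc.concaveOn.2 ⟨le_rfl, Real.pi_nonneg⟩
        ⟨by positivity, by linarith [Real.pi_nonneg]⟩ (by linarith) (by linarith) (by ring)
    simp only [Real.sin_zero, Real.sin_pi_div_six, smul_eq_mul] at this
    calc x = (1 - 2 * x) * 0 + 2 * x * (1 / 2) := by ring
      _ ≤ _ := this
      _ = Real.sin (π / 3 * x) := by ring_nf
  exact (Real.arcsin_le_iff_le_sin ⟨by linarith, by linarith⟩
    ⟨by nlinarith [Real.pi_pos], by nlinarith [Real.pi_pos]⟩).2 hsin

lemma fourteen_le_div_one_sub_gammaC_unitDisk {m : ℕ} (hm : 0 < m)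
    (hγ : gammaC m (closedBall (0 : ℂ) 1) ≤ 1 / 2) :
    14 ≤ m / (1 - gammaC m (closedBall (0 : ℂ) 1)) := by
  have hπ := pi_le_of_gammaC_unitDisk_le_half hm hγ
  have h0 := gammaC_nonneg m (closedBall (0 : ℂ) 1)
  set γ := gammaC m (closedBall (0 : ℂ) 1)
  have hm1 : (1 : ℝ) ≤ m := by exact_mod_cast hm
  have h3 : 3 ≤ (m - 1) * γ := by
    have := mul_le_mul_of_nonneg_left (arcsin_le_pi_div_three_mul h0 hγ) (sub_nonneg.2 hm1)
    nlinarith [Real.pi_pos]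
  have h7 : (7 : ℝ) ≤ m := by nlinarith
  -- Multiplied by `m - 1`, the claim follows from `3 ≤ (m - 1) * γ` and `0 ≤ (m - 7) * (m - 8)`.
  have hint : (0 : ℝ) ≤ (m - 7) * (m - 8) := by
    obtain rfl | h8 : 7 = m ∨ 8 ≤ m := Nat.eq_or_lt_of_le (by exact_mod_cast h7)
    · norm_num
    · have : (8 : ℝ) ≤ m := by exact_mod_cast h8
      nlinarith
  rw [le_div_iff₀ (by linarith)]
  exact le_of_mul_le_mul_left (a := (m - 1 : ℝ)) (by nlinarith) (by linarith)

end Disk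

section HexagonSandwich

variable {S : Set (ℝ × ℝ)}

/-- The affine regular hexagon with vertices `±(1, 0)`, `±(0, 1)`, `±(1, -1)`. -/
def hexagon : Set (ℝ × ℝ) := {p | |p.1| ≤ 1 ∧ |p.2| ≤ 1 ∧ |p.1 + p.2| ≤ 1}

/-- The six-pointed star obtained by prolonging the sides of `hexagon`, as a union of two
triangles. -/
def hexagram : Set (ℝ × ℝ) :=
  {p | p.1 ≤ 1 ∧ p.2 ≤ 1 ∧ -1 ≤ p.1 + p.2} ∪ {p | -1 ≤ p.1 ∧ -1 ≤ p.2 ∧ p.1 + p.2 ≤ 1}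

/-- The linear map that rotates `hexagon` by one vertex. -/
def hexRotation : ℝ × ℝ →ₗ[ℝ] ℝ × ℝ :=
  (-LinearMap.snd ℝ ℝ ℝ).prod (LinearMap.fst ℝ ℝ ℝ + LinearMap.snd ℝ ℝ ℝ)

/-- The affine reflection of `hexagon` that preserves the second coordinate. -/
def hexReflection : ℝ × ℝ →ₗ[ℝ] ℝ × ℝ :=
  (-LinearMap.fst ℝ ℝ ℝ - LinearMap.snd ℝ ℝ ℝ).prod (LinearMap.snd ℝ ℝ ℝ)

lemma hexRotation_apply (s t : ℝ) : hexRotation (s, t) = (-t, s + t) := rfl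

lemma hexReflection_apply (s t : ℝ) : hexReflection (s, t) = (-s - t, t) := rfl

lemma neg_hexagon : -hexagon = hexagon := by
  ext ⟨s, t⟩
  simp [hexagon, ← neg_add_rev, add_comm]

lemma mapsTo_hexRotation_hexagon : MapsTo hexRotation hexagon hexagon := by
  rintro ⟨s, t⟩ ⟨hs, ht, hst⟩
  exact ⟨(abs_neg t).trans_le ht, hst, by simpa [hexRotation_apply] using hs⟩

lemma mapsTo_hexReflection_hexagon : MapsTo hexReflection hexagon hexagon := by
  rintro ⟨s, t⟩ ⟨hs, ht, hst⟩
  refine ⟨?_, ht, by simpa [hexReflection_apply] using hs⟩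
  rw [hexReflection_apply, ← neg_add', abs_neg]
  exact hst

lemma mk_mem_of_eq_convexComb (hS : Convex ℝ S) {a b c d x y l : ℝ} (hab : (a, b) ∈ S)
    (hcd : (c, d) ∈ S) (hl : 0 ≤ l) (hl' : l ≤ 1) (hx : x = (1 - l) * a + l * c)
    (hy : y = (1 - l) * b + l * d) : (x, y) ∈ S := by
  simpa [hx, hy] using hS hab hcd (sub_nonneg.2 hl') hl (by ring)

lemma mk_mem_of_fst_mem_Icc (hS : Convex ℝ S) {a b t x : ℝ} (ha : (a, t) ∈ S) (hb : (b, t) ∈ S)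
    (hx : x ∈ Icc a b) : (x, t) ∈ S := by
  refine hS.segment_subset ha hb ?_
  rw [← Prod.image_mk_segment_left, segment_eq_Icc (hx.1.trans hx.2)]
  exact mem_image_of_mem _ hx

lemma mk_mem_of_snd_mem_Icc (hS : Convex ℝ S) {a b s y : ℝ} (ha : (s, a) ∈ S) (hb : (s, b) ∈ S)
    (hy : y ∈ Icc a b) : (s, y) ∈ S := by
  refine hS.segment_subset ha hb ?_
  rw [← Prod.image_mk_segment_right, segment_eq_Icc (hy.1.trans hy.2)]
  exact mem_image_of_mem _ hy

lemma hexagon_subset (hS : Convex ℝ S) (right : (1, 0) ∈ S) (topRight : (0, 1) ∈ S)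
    (topLeft : (-1, 1) ∈ S) (left : (-1, 0) ∈ S) (bottomLeft : (0, -1) ∈ S)
    (bottomRight : (1, -1) ∈ S) : hexagon ⊆ S := by
  rintro ⟨s, t⟩ ⟨hs, ht, hst⟩
  rw [abs_le] at hs ht hst
  obtain h | h := le_total 0 t
  · have hleft : (-1, t) ∈ S := mk_mem_of_snd_mem_Icc hS left topLeft ⟨h, ht.2⟩
    have hright : (1 - t, t) ∈ S :=
      mk_mem_of_eq_convexComb hS right topRight h ht.2 (by ring) (by ring)
    exact mk_mem_of_fst_mem_Icc hS hleft hright ⟨hs.1, by linarith⟩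
  · have hleft : (-1 - t, t) ∈ S :=
      mk_mem_of_eq_convexComb hS left bottomLeft (neg_nonneg.2 h) (by linarith) (by ring) (by ring)
    have hright : (1, t) ∈ S := mk_mem_of_snd_mem_Icc hS bottomRight right ⟨ht.1, h⟩
    exact mk_mem_of_fst_mem_Icc hS hleft hright ⟨by linarith, hs.2⟩

/-! ### Seven half-size copies cover a set between the hexagon and the hexagram -/

lemma exists_hexRotation_pow_eq {p : ℝ × ℝ} (hp : p ∈ hexagram) :
    ∃ j : Fin 6, ∃ q ∈ Icc (0 : ℝ × ℝ) 1, (hexRotation ^ (j : ℕ)) q = p := by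
  obtain ⟨s, t⟩ := p
  have hrot (j : Fin 6) (x y : ℝ) (hxy : 0 ≤ x ∧ x ≤ 1 ∧ 0 ≤ y ∧ y ≤ 1)
      (hj : (hexRotation ^ (j : ℕ)) (x, y) = (s, t)) :
      ∃ j : Fin 6, ∃ q ∈ Icc (0 : ℝ × ℝ) 1, (hexRotation ^ (j : ℕ)) q = (s, t) :=
    ⟨j, (x, y), ⟨⟨hxy.1, hxy.2.2.1⟩, hxy.2.1, hxy.2.2.2⟩, hj⟩
  simp only [hexagram, mem_union, mem_ofPred_eq] at hp
  rcases le_total 0 s with hs | hs <;> rcases le_total 0 t with ht | ht <;>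
    rcases le_total 0 (s + t) with hst | hst
  · exact hrot 0 s t (by grind) rfl
  · exact hrot 0 s t (by grind) rfl
  · exact hrot 5 (-t) (s + t) (by grind) (by simp [pow_succ, hexRotation_apply])
  · exact hrot 4 (-(s + t)) s (by grind) (by simp [pow_succ, hexRotation_apply])
  · exact hrot 1 (s + t) (-s) (by grind) (by simp [hexRotation_apply])
  · exact hrot 2 t (-(s + t)) (by grind) (by simp [pow_succ, hexRotation_apply])
  · exact hrot 3 (-s) (-t) (by grind) (by simp [pow_succ, hexRotation_apply, add_comm])
  · exact hrot 3 (-s) (-t) (by grind) (by simp [pow_succ, hexRotation_apply, add_comm])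

lemma mem_or_two_smul_sub_mem (hS : Convex ℝ S) (hhex : hexagon ⊆ S) {p : ℝ × ℝ} (hp : p ∈ S)
    (hp' : p ∈ Icc 0 1) : (2 : ℝ) • p ∈ S ∨ (2 : ℝ) • p - 1 ∈ S := by
  obtain ⟨s, t⟩ := p
  obtain ⟨⟨hs : 0 ≤ s, ht : 0 ≤ t⟩, hs' : s ≤ 1, ht' : t ≤ 1⟩ := hp'
  have hzero : (0, 0) ∈ S := hhex (by simp [hexagon])
  have hs0 : (s, 0) ∈ S := hhex (by simp [hexagon, abs_of_nonneg hs, hs'])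
  have h0t : (0, t) ∈ S := hhex (by simp [hexagon, abs_of_nonneg ht, ht'])
  change (2 * s, 2 * t) ∈ S ∨ (2 * s - 1, 2 * t - 1) ∈ S
  by_cases hsmall : 2 * s + 2 * t ≤ 1
  · left
    refine hhex ⟨?_, ?_, ?_⟩ <;> rw [abs_le] <;> constructor <;> linarith
  by_cases hbig : 1 ≤ 2 * s ∧ 1 ≤ 2 * t
  · right
    have h0 : (0, 2 * t - 1) ∈ S := mk_mem_of_snd_mem_Icc hS hzero h0t ⟨by linarith, by linarith⟩
    have h1 : (s, 2 * t - 1) ∈ S := mk_mem_of_snd_mem_Icc hS hs0 hp ⟨by linarith, by linarith⟩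
    exact mk_mem_of_fst_mem_Icc hS h0 h1 ⟨by linarith, by linarith⟩
  · right
    refine hhex ⟨?_, ?_, ?_⟩ <;> rw [abs_le] <;> constructor <;> grind

lemma coversWith_half_seven_of_hexagon_subset (hS : Convex ℝ S) (hhex : hexagon ⊆ S)
    (hstar : S ⊆ hexagram) : CoversWith S (1 / 2) 7 := by
  refine ⟨Fin.cons 0 fun j : Fin 6 => (1 / 2 : ℝ) • (hexRotation ^ (j : ℕ)) 1, fun p hp => ?_⟩
  obtain ⟨j, q, hq, rfl⟩ := exists_hexRotation_pow_eq (hstar hp)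
  have hmaps : MapsTo (hexRotation ^ (j : ℕ)) hexagon S := by
    rw [Module.End.coe_pow]
    exact (mapsTo_hexRotation_hexagon.iterate j).mono_right hhex
  obtain h | h := mem_or_two_smul_sub_mem (hS.linear_preimage (hexRotation ^ (j : ℕ))) hmaps hp hq
  · exact mem_iUnion.2 ⟨0, _, h, by simp⟩
  · exact mem_iUnion.2 ⟨j.succ, _, h, by simp [smul_sub]⟩

/-! ### Maximality of the hexagon forces a set into the hexagram -/

/-- `S` contains a horizontal segment of length `l` at height `h`. -/
def HasChord (S : Set (ℝ × ℝ)) (h l : ℝ) : Prop := ∃ x, (x, h) ∈ S ∧ (x + l, h) ∈ S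

/-- Whenever `S` has a chord of length `2 * L` at some height and chords of length `L` at distance
`d` above and below it, the hexagon spanned by the three chords has at most the area of `hexagon`,
whose chords have `L = d = 1`. -/
def ChordBound (S : Set (ℝ × ℝ)) : Prop :=
  ∀ ⦃h d L : ℝ⦄, 0 ≤ L → HasChord S h (2 * L) → HasChord S (h + d) L → HasChord S (h - d) L →
    L * d ≤ 1

lemma hasChord_of_add_le (hS : Convex ℝ S) {x y h l : ℝ} (hx : (x, h) ∈ S) (hy : (y, h) ∈ S)
    (hl : 0 ≤ l) (hxy : x + l ≤ y) : HasChord S h l :=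
  ⟨x, hx, mk_mem_of_fst_mem_Icc hS hx hy ⟨by linarith, hxy⟩⟩

lemma HasChord.of_neg {h l : ℝ} : HasChord (-S) h l → HasChord S (-h) l := by
  rintro ⟨x, hx, hxl⟩
  exact ⟨-(x + l), hxl, by simpa using hx⟩

lemma HasChord.of_preimage_hexReflection {h l : ℝ} :
    HasChord (hexReflection ⁻¹' S) h l → HasChord S h l := by
  rintro ⟨x, hx, hxl⟩
  rw [mem_preimage, hexReflection_apply] at hx hxl
  exact ⟨-(x + l) - h, hxl, by convert hx using 2; ring⟩

lemma ChordBound.neg (hS : ChordBound S) : ChordBound (-S) := fun h d L hL hmid htop hbot =>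
  hS hL hmid.of_neg (by simpa [neg_add_eq_sub] using hbot.of_neg)
    (by simpa [sub_eq_add_neg, add_comm] using htop.of_neg)

lemma ChordBound.preimage_hexReflection (hS : ChordBound S) :
    ChordBound (hexReflection ⁻¹' S) := fun _ _ _ hL hmid htop hbot =>
  hS hL hmid.of_preimage_hexReflection htop.of_preimage_hexReflection
    hbot.of_preimage_hexReflection

lemma exists_one_add_mk_zero_mem (hS : Convex ℝ S) (hhex : hexagon ⊆ S) {s t : ℝ}
    (hst : (s, t) ∈ S) (ht : 0 ≤ t) (hs : 1 < s) : ∃ k, 0 < k ∧ (1 + k, 0) ∈ S := by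
  have bottomRight : (1, -1) ∈ S := hhex (by simp [hexagon])
  refine ⟨(s - 1) / (1 + t), div_pos (by linarith) (by linarith), ?_⟩
  refine mk_mem_of_eq_convexComb hS hst bottomRight (l := t / (1 + t)) (by positivity)
    ((div_le_one (by linarith)).2 (by linarith)) ?_ ?_ <;> field_simp <;> ring

lemma fst_le_one_of_chordBound (hS : Convex ℝ S) (hhex : hexagon ⊆ S) (hbound : ChordBound S)
    {s t : ℝ} (hst : (s, t) ∈ S) (ht : 0 ≤ t) : s ≤ 1 := by
  by_contra! hs
  obtain ⟨k, hk, hkS⟩ := exists_one_add_mk_zero_mem hS hhex hst ht hs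
  have topRight : (0, 1) ∈ S := hhex (by simp [hexagon])
  have topLeft : (-1, 1) ∈ S := hhex (by simp [hexagon])
  have left : (-1, 0) ∈ S := hhex (by simp [hexagon])
  have bottomLeft : (0, -1) ∈ S := hhex (by simp [hexagon])
  have bottomRight : (1, -1) ∈ S := hhex (by simp [hexagon])
  -- The middle chord gains `k` in length, the two others gain `k / 2` at a cost of `ε` in height.
  let ε := k / (2 * (1 + k))
  have hε : 0 < ε := by positivity
  have hεk : ε * (1 + k) = k / 2 := by simp only [ε]; field_simp
  have hε1 : ε ≤ 1 := by nlinarith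
  have hmid : HasChord S 0 (2 * (1 + k / 2)) :=
    hasChord_of_add_le hS left hkS (by linarith) (by linarith)
  have htop : HasChord S (1 - ε) (1 + k / 2) :=
    ⟨-1, mk_mem_of_eq_convexComb hS topLeft left hε.le hε1 (by ring) (by ring),
      mk_mem_of_eq_convexComb hS topRight hkS hε.le hε1 (by linarith) (by ring)⟩
  have hbot : HasChord S (-(1 - ε)) (1 + k / 2) :=
    ⟨-ε, mk_mem_of_eq_convexComb hS bottomLeft left hε.le hε1 (by ring) (by ring),
      mk_mem_of_eq_convexComb hS bottomRight hkS hε.le hε1 (by linarith) (by ring)⟩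
  have := hbound (by linarith) hmid (by simpa using htop) (by simpa using hbot)
  nlinarith

lemma exists_mk_one_mem (hS : Convex ℝ S) (hhex : hexagon ⊆ S) {s t : ℝ} (hst : (s, t) ∈ S)
    (ht : 1 < t) (h : 1 < s + t) : ∃ k, 0 < k ∧ k ≤ 1 ∧ (k, 1) ∈ S := by
  have right : (1, 0) ∈ S := hhex (by simp [hexagon])
  have topRight : (0, 1) ∈ S := hhex (by simp [hexagon])
  have hpos : 0 < (s + t - 1) / t := div_pos (by linarith) (by linarith)
  have hmem : ((s + t - 1) / t, 1) ∈ S := by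
    refine mk_mem_of_eq_convexComb hS hst right (l := (t - 1) / t)
      (div_nonneg (by linarith) (by linarith)) ((div_le_one (by linarith)).2 (by linarith))
      ?_ ?_ <;> field_simp <;> ring
  exact ⟨min ((s + t - 1) / t) 1, lt_min hpos one_pos, min_le_right _ _,
    mk_mem_of_fst_mem_Icc hS topRight hmem ⟨le_min hpos.le zero_le_one, min_le_left _ _⟩⟩

lemma add_le_one_of_chordBound (hS : Convex ℝ S) (hhex : hexagon ⊆ S) (hbound : ChordBound S)
    {s t : ℝ} (hst : (s, t) ∈ S) (ht : 1 < t) : s + t ≤ 1 := by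
  by_contra! h
  obtain ⟨k, hk, hk1, hkS⟩ := exists_mk_one_mem hS hhex hst ht h
  have right : (1, 0) ∈ S := hhex (by simp [hexagon])
  have topLeft : (-1, 1) ∈ S := hhex (by simp [hexagon])
  have left : (-1, 0) ∈ S := hhex (by simp [hexagon])
  have bottomLeft : (0, -1) ∈ S := hhex (by simp [hexagon])
  have bottomRight : (1, -1) ∈ S := hhex (by simp [hexagon])
  -- The top chord is raised by `2 * ε` and the middle one by `ε`; the bottom one stays.
  obtain ⟨l, hl, hlk, hlt⟩ : ∃ l, 0 < l ∧ l ≤ k / 2 ∧ l * (t - 1) ≤ 1 := by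
    have ht' : 0 < t - 1 := by linarith
    exact ⟨min (k / 2) (1 / (t - 1)), lt_min (by linarith) (by positivity), min_le_left _ _,
      (le_div_iff₀ ht').1 (min_le_right _ _)⟩
  let ε := l * (t - 1) / 2
  have hε : 0 < ε := div_pos (mul_pos hl (by linarith)) two_pos
  have hε1 : ε ≤ 1 := by linarith [show ε = l * (t - 1) / 2 from rfl]
  let L := 1 - ε * (1 - k) / 2
  have hL : 0 ≤ L ∧ L ≤ 1 := by constructor <;> simp only [L] <;> nlinarith
  have hmid : HasChord S ε (2 * L) :=
    hasChord_of_add_le hS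
      (mk_mem_of_eq_convexComb hS left topLeft hε.le hε1 (x := -1) (by ring) (by ring))
      (mk_mem_of_eq_convexComb hS right hkS hε.le hε1 rfl (by ring)) (by linarith [hL.1])
      (by simp only [L]; linarith)
  have htop : HasChord S (ε + (1 + ε)) L :=
    hasChord_of_add_le hS
      (mk_mem_of_eq_convexComb hS topLeft hst hl.le (by linarith) rfl (by simp only [ε]; ring))
      (mk_mem_of_eq_convexComb hS hkS hst hl.le (by linarith) rfl (by simp only [ε]; ring))
      hL.1 (by nlinarith [hL.2])
  have hbot : HasChord S (ε - (1 + ε)) L := by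
    rw [show ε - (1 + ε) = -1 by ring]
    exact hasChord_of_add_le hS bottomLeft bottomRight hL.1 (by linarith [hL.2])
  have hlarge : 1 < L * (1 + ε) := by simp only [L]; nlinarith [mul_pos hε hk]
  exact hlarge.not_ge (hbound hL.1 hmid htop hbot)

lemma mem_hexagram_of_snd_nonneg (hS : Convex ℝ S) (hhex : hexagon ⊆ S) (hbound : ChordBound S)
    {p : ℝ × ℝ} (hp : p ∈ S) (hp' : 0 ≤ p.2) : p ∈ hexagram := by
  obtain ⟨s, t⟩ := p
  have hS' : Convex ℝ (hexReflection ⁻¹' S) := hS.linear_preimage hexReflection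
  have hhex' : hexagon ⊆ hexReflection ⁻¹' S := mapsTo_hexReflection_hexagon.mono_right hhex
  have hreflect : (-s - t, t) ∈ hexReflection ⁻¹' S := by simpa [hexReflection_apply] using hp
  obtain ht | ht := le_or_gt t 1
  · have hleft := fst_le_one_of_chordBound hS' hhex' hbound.preimage_hexReflection hreflect hp'
    exact .inl ⟨fst_le_one_of_chordBound hS hhex hbound hp hp', ht, by linarith⟩
  · have hleft := add_le_one_of_chordBound hS' hhex' hbound.preimage_hexReflection hreflect ht
    exact .inr ⟨by linarith, by linarith, add_le_one_of_chordBound hS hhex hbound hp ht⟩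

lemma subset_hexagram_of_chordBound (hS : Convex ℝ S) (hhex : hexagon ⊆ S)
    (hbound : ChordBound S) : S ⊆ hexagram := by
  intro p hp
  obtain h | h := le_total 0 p.2
  · exact mem_hexagram_of_snd_nonneg hS hhex hbound hp h
  · have hhex' : hexagon ⊆ -S := neg_hexagon ▸ neg_subset_neg.2 hhex
    have := mem_hexagram_of_snd_nonneg hS.neg hhex' hbound.neg (neg_mem_neg.2 hp)
      (neg_nonneg.2 h)
    simp only [hexagram, mem_union, mem_ofPred_eq, Prod.fst_neg, Prod.snd_neg] at this ⊢
    grind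

end HexagonSandwich

section ChordTriples

/-- The determinant of two vectors of the plane. -/
def wedge (u v : ℝ × ℝ) : ℝ := u.1 * v.2 - u.2 * v.1

lemma wedge_smul (u v x : ℝ × ℝ) : wedge u v • x = wedge x v • u + wedge u x • v := by
  ext <;> simp only [wedge, Prod.fst_add, Prod.snd_add, Prod.smul_fst, Prod.smul_snd,
    smul_eq_mul] <;> ring

/-- Three chords of a planar set parallel to a direction `u`, the outer two of equal length and
symmetric about the middle height, the middle one twice as long: `(c, v, L, p)` encodes the outer
chords with midpoints `c ± v` and length `2 * L` and the middle chord with midpoint `c + p • u`.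
It is kept as a product in order to inherit the topology and the vector space structure. -/
abbrev ChordTriple : Type := (ℝ × ℝ) × (ℝ × ℝ) × ℝ × ℝ

lemma sphere_inter_inter_neg_nonempty {E : Type*} [NormedAddCommGroup E] [NormedSpace ℝ E]
    {A : Set E} (hE : 1 < Module.rank ℝ E) (hA : IsClosed A) (hcover : sphere 0 1 ⊆ A ∪ -A) :
    (sphere 0 1 ∩ (A ∩ -A)).Nonempty := by
  have : Nontrivial E := rank_pos_iff_nontrivial.1 (zero_lt_one.trans hE)
  obtain ⟨e, he⟩ : (sphere (0 : E) 1).Nonempty := NormedSpace.sphere_nonempty.2 zero_le_one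
  have he' : -e ∈ sphere (0 : E) 1 := by simpa using he
  refine isPreconnected_closed_iff.1 (isPreconnected_sphere hE 0 1) A (-A) hA hA.neg hcover ?_ ?_
  · exact (hcover he).elim (fun h => ⟨e, he, h⟩) (fun h => ⟨-e, he', h⟩)
  · exact (hcover he).elim (fun h => ⟨-e, he', by simpa using h⟩) (fun h => ⟨e, he, h⟩)

namespace ChordTriple

variable {K : Set (ℝ × ℝ)} {u : ℝ × ℝ} {w w' : ChordTriple}

/-- The midpoint of the midpoints of the outer chords. -/
abbrev center (w : ChordTriple) : ℝ × ℝ := w.1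

/-- The vector from the center to the midpoint of the upper chord. -/
abbrev offset (w : ChordTriple) : ℝ × ℝ := w.2.1

/-- Half the length of the outer chords. -/
abbrev halfLength (w : ChordTriple) : ℝ := w.2.2.1

/-- The displacement of the midpoint of the middle chord from the center. -/
abbrev shift (w : ChordTriple) : ℝ := w.2.2.2

/-- The endpoints of the three chords, ordered so that `Fin.rev` corresponds to `flip`. -/
def vertex (u : ℝ × ℝ) (w : ChordTriple) : Fin 6 → ℝ × ℝ :=
  ![w.center + w.offset + w.halfLength • u, w.center + w.offset - w.halfLength • u,
    w.center + (w.shift + 2 * w.halfLength) • u, w.center + (w.shift - 2 * w.halfLength) • u,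
    w.center - w.offset + w.halfLength • u, w.center - w.offset - w.halfLength • u]

/-- One sixth of the area of the hexagon spanned by the three chords. -/
def area (u : ℝ × ℝ) (w : ChordTriple) : ℝ := w.halfLength * wedge u w.offset

/-- The chords of `w` in direction `u` lie in the convex set `K`. -/
def Fits (K : Set (ℝ × ℝ)) (u : ℝ × ℝ) (w : ChordTriple) : Prop :=
  0 ≤ w.halfLength ∧ ∀ i, vertex u w i ∈ K

/-- `w` spans a hexagon of largest area among the chord triples of `K` in direction `u`. -/
def IsMaximal (K : Set (ℝ × ℝ)) (u : ℝ × ℝ) (w : ChordTriple) : Prop :=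
  Fits K u w ∧ ∀ ⦃w'⦄, Fits K u w' → area u w' ≤ area u w

/-- The same three chords, described with respect to the opposite direction. -/
def flip (w : ChordTriple) : ChordTriple := (w.center, -w.offset, w.halfLength, -w.shift)

lemma continuous_vertex (i : Fin 6) :
    Continuous fun z : (ℝ × ℝ) × ChordTriple => vertex z.1 z.2 i := by
  fin_cases i <;> simp only [vertex, center, offset, halfLength, shift] <;> dsimp <;> fun_prop

lemma continuous_area : Continuous fun z : (ℝ × ℝ) × ChordTriple => area z.1 z.2 := by
  simp only [area, wedge, halfLength, offset]
  fun_prop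

lemma vertex_convexComb (u : ℝ × ℝ) (w w' : ChordTriple) (a b : ℝ) (i : Fin 6) :
    vertex u (a • w + b • w') i = a • vertex u w i + b • vertex u w' i := by
  fin_cases i <;> simp [vertex, center, offset, halfLength, shift] <;> module

lemma vertex_const (u c : ℝ × ℝ) (i : Fin 6) : vertex u (c, 0, 0, 0) i = c := by
  fin_cases i <;> simp [vertex, center, offset, halfLength, shift]

lemma vertex_neg_flip (u : ℝ × ℝ) (w : ChordTriple) (i : Fin 6) :
    vertex (-u) (flip w) i = vertex u w i.rev := by
  fin_cases i <;> simp [vertex, flip, center, offset, halfLength, shift, Fin.rev] <;> module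

lemma flip_flip (w : ChordTriple) : flip (flip w) = w := by
  simp [flip, center, offset, halfLength, shift]

lemma area_neg_flip (u : ℝ × ℝ) (w : ChordTriple) : area (-u) (flip w) = area u w := by
  simp [area, flip, wedge, offset, halfLength]

lemma Fits.mono {K' : Set (ℝ × ℝ)} (h : Fits K u w) (hK : K ⊆ K') : Fits K' u w :=
  ⟨h.1, fun i => hK (h.2 i)⟩

lemma Fits.neg_flip (h : Fits K u w) : Fits K (-u) (flip w) :=
  ⟨h.1, fun i => vertex_neg_flip u w i ▸ h.2 i.rev⟩

lemma IsMaximal.neg_flip (h : IsMaximal K u w) : IsMaximal K (-u) (flip w) := by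
  refine ⟨h.1.neg_flip, fun w' hw' => ?_⟩
  have hflip : Fits K u (flip w') := neg_neg u ▸ hw'.neg_flip
  simpa only [← area_neg_flip u, flip_flip] using h.2 hflip

lemma Fits.convexComb (hK : Convex ℝ K) (h : Fits K u w) (h' : Fits K u w') {a b : ℝ}
    (ha : 0 ≤ a) (hb : 0 ≤ b) (hab : a + b = 1) : Fits K u (a • w + b • w') :=
  ⟨add_nonneg (mul_nonneg ha h.1) (mul_nonneg hb h'.1), fun i => by
    rw [vertex_convexComb]
    exact hK (h.2 i) (h'.2 i) ha hb hab⟩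

lemma isClosed_setOf_fits (hK : IsClosed K) :
    IsClosed {z : (ℝ × ℝ) × ChordTriple | Fits K z.1 z.2} := by
  have hlen : Continuous fun z : (ℝ × ℝ) × ChordTriple => z.2.halfLength :=
    continuous_snd.snd.snd.fst
  refine (isClosed_le continuous_const hlen).and ?_
  simp only [ofPred_forall]
  exact isClosed_iInter fun i => hK.preimage (continuous_vertex i)

lemma isOpen_setOf_fits (hK : IsOpen K) (w : ChordTriple) : IsOpen {u | Fits K u w} := by
  refine isOpen_const.and ?_
  simp only [ofPred_forall]
  exact isOpen_iInter_of_finite fun i =>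
    hK.preimage ((continuous_vertex i).comp (Continuous.prodMk_left w))

lemma norm_le_of_fits {R : ℝ} (hK : K ⊆ closedBall 0 R) (hu : ‖u‖ = 1) (h : Fits K u w) :
    ‖w‖ ≤ 2 * R := by
  have hnorm (i : Fin 6) : ‖vertex u w i‖ ≤ R := mem_closedBall_zero_iff.1 (hK (h.2 i))
  have hadd (i j : Fin 6) : ‖(1 / 2 : ℝ) • (vertex u w i + vertex u w j)‖ ≤ R := by
    rw [norm_smul, Real.norm_of_nonneg (by norm_num)]
    linarith [norm_add_le (vertex u w i) (vertex u w j), hnorm i, hnorm j]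
  have hsub (i j : Fin 6) : ‖(1 / 2 : ℝ) • (vertex u w i - vertex u w j)‖ ≤ R := by
    rw [norm_smul, Real.norm_of_nonneg (by norm_num)]
    linarith [norm_sub_le (vertex u w i) (vertex u w j), hnorm i, hnorm j]
  have hcenter : (1 / 2 : ℝ) • (vertex u w 0 + vertex u w 5) = w.center := by
    simp only [vertex, Matrix.cons_val]
    module
  have hoffset : (1 / 2 : ℝ) • (vertex u w 0 - vertex u w 4) = w.offset := by
    simp only [vertex, Matrix.cons_val]
    module
  have hlength : (1 / 2 : ℝ) • (vertex u w 0 - vertex u w 1) = w.halfLength • u := by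
    simp only [vertex, Matrix.cons_val]
    module
  have hshift : (1 / 2 : ℝ) • (vertex u w 2 + vertex u w 3)
      - (1 / 2 : ℝ) • (vertex u w 0 + vertex u w 5) = w.shift • u := by
    simp only [vertex, Matrix.cons_val]
    module
  have hR : 0 ≤ R := (norm_nonneg _).trans (hnorm 0)
  have hlength_le : ‖w.halfLength‖ ≤ R := by
    simpa only [hlength, norm_smul, hu, mul_one] using hsub 0 1
  have hshift_le : ‖w.shift‖ ≤ 2 * R := by
    have := (norm_sub_le _ _).trans (add_le_add (hadd 2 3) (hadd 0 5))
    rwa [hshift, norm_smul, hu, mul_one, ← two_mul] at this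
  have hle : R ≤ 2 * R := by linarith
  exact norm_prod_le_iff.2 ⟨(hcenter ▸ hadd 0 5).trans hle, norm_prod_le_iff.2
    ⟨(hoffset ▸ hsub 0 4).trans hle, norm_prod_le_iff.2 ⟨hlength_le.trans hle, hshift_le⟩⟩⟩

lemma exists_isMaximal (hK : IsCompact K) (hne : K.Nonempty) (hu : ‖u‖ = 1) :
    ∃ w, IsMaximal K u w := by
  obtain ⟨o, ho⟩ := hne
  obtain ⟨R, hR⟩ := hK.isBounded.subset_closedBall 0
  have hcomp : IsCompact {w | Fits K u w} :=
    isCompact_of_isClosed_isBounded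
      ((isClosed_setOf_fits hK.isClosed).preimage (Continuous.prodMk_right u))
      (isBounded_closedBall.subset fun w hw =>
        mem_closedBall_zero_iff.2 (norm_le_of_fits hR hu hw))
  exact hcomp.exists_isMaxOn ⟨(o, 0, 0, 0), le_rfl, fun i => by rwa [vertex_const]⟩
    (continuous_area.comp (Continuous.prodMk_right u)).continuousOn

lemma area_le_of_forall_fits_interior (hK : Convex ℝ K) (hint : (interior K).Nonempty) {M : ℝ}
    (hM : ∀ w', Fits (interior K) u w' → area u w' ≤ M) (hw : Fits K u w) : area u w ≤ M := by
  obtain ⟨o, ho⟩ := hint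
  have hshrink (ε : ℝ) (hε : ε ∈ Ioo (0 : ℝ) 1) : (1 - ε) ^ 2 * area u w ≤ M := by
    have hε' : 0 < 1 - ε := sub_pos.2 hε.2
    let w' : ChordTriple := ε • ((o, 0, 0, 0) : ChordTriple) + (1 - ε) • w
    have hfits : Fits (interior K) u w' := by
      refine ⟨by simpa [w', halfLength] using mul_nonneg hε'.le hw.1, fun i => ?_⟩
      rw [vertex_convexComb, vertex_const]
      exact hK.combo_interior_self_mem_interior ho (hw.2 i) hε.1 hε'.le (by ring)
    refine le_of_eq_of_le ?_ (hM w' hfits)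
    simp only [area, wedge, w', halfLength, offset, Prod.fst_add, Prod.snd_add,
      Prod.smul_fst, Prod.smul_snd, smul_eq_mul, Prod.fst_zero, Prod.snd_zero]
    ring
  have hlim : Tendsto (fun ε : ℝ => (1 - ε) ^ 2 * area u w) (𝓝[>] 0) (𝓝 (area u w)) := by
    have hcont : Continuous fun ε : ℝ => (1 - ε) ^ 2 * area u w := by fun_prop
    simpa using (hcont.tendsto 0).mono_left nhdsWithin_le_nhds
  exact le_of_tendsto hlim (mem_of_superset (Ioo_mem_nhdsGT one_pos) hshrink)

lemma isMaximal_iff_interior (hK : Convex ℝ K) (hint : (interior K).Nonempty) :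
    IsMaximal K u w ↔ Fits K u w ∧ ∀ w', Fits (interior K) u w' → area u w' ≤ area u w :=
  and_congr_right fun _ => ⟨fun h _ hw' => h (hw'.mono interior_subset),
    fun h _ hw' => area_le_of_forall_fits_interior hK hint h hw'⟩

-- The set of competitors varies with the direction `u`, but the competitors in the interior
-- of `K` stay admissible for nearby directions.
lemma isClosed_setOf_isMaximal (hK : IsConvexBody K) :
    IsClosed {z : (ℝ × ℝ) × ChordTriple | IsMaximal K z.1 z.2} := by
  obtain ⟨hcomp, hconv, hint⟩ := hK
  simp only [isMaximal_iff_interior hconv hint]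
  refine (isClosed_setOf_fits hcomp.isClosed).and ?_
  simp only [ofPred_forall]
  refine isClosed_iInter fun w' => isClosed_imp ?_ (isClosed_le ?_ continuous_area)
  · exact (isOpen_setOf_fits isOpen_interior w').preimage continuous_fst
  · exact continuous_area.comp (continuous_fst.prodMk continuous_const)

lemma isCompact_setOf_isMaximal (hK : IsConvexBody K) :
    IsCompact {z : (ℝ × ℝ) × ChordTriple | z.1 ∈ sphere 0 1 ∧ IsMaximal K z.1 z.2} := by
  obtain ⟨R, hR⟩ := hK.1.isBounded.subset_closedBall 0
  refine ((isCompact_sphere 0 1).prod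
    (isCompact_closedBall (0 : ChordTriple) (2 * R))).of_isClosed_subset
    ((isClosed_sphere.preimage continuous_fst).inter (isClosed_setOf_isMaximal hK)) ?_
  rintro ⟨u, w⟩ ⟨hu, hw⟩
  exact ⟨hu, mem_closedBall_zero_iff.2 (norm_le_of_fits hR (mem_sphere_zero_iff_norm.1 hu) hw.1)⟩

lemma exists_fits_area_pos (hint : (interior K).Nonempty) (hu : u ≠ 0) :
    ∃ w, Fits K u w ∧ 0 < area u w := by
  obtain ⟨o, ho⟩ := hint
  let w : ℝ → ChordTriple := fun ε => (o, ε • (-u.2, u.1), ε, 0)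
  have hmem : ∀ᶠ ε in 𝓝[>] 0, ∀ i, vertex u (w ε) i ∈ K := by
    refine eventually_all.2 fun i => ?_
    have hcont : Continuous fun ε => vertex u (w ε) i :=
      (continuous_vertex i).comp (continuous_const.prodMk (by fun_prop))
    have hzero : vertex u (w 0) i = o := by
      simp only [w, zero_smul, vertex_const]
    exact nhdsWithin_le_nhds (hcont.continuousAt.eventually_mem
      (hzero ▸ mem_interior_iff_mem_nhds.1 ho))
  obtain ⟨ε, hε, hpos⟩ := (hmem.and self_mem_nhdsWithin).exists
  refine ⟨w ε, ⟨le_of_lt hpos, hε⟩, ?_⟩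
  have hnorm : 0 < u.1 ^ 2 + u.2 ^ 2 := by
    contrapose! hu
    exact Prod.ext (pow_eq_zero_iff two_ne_zero |>.1 (by nlinarith))
      (pow_eq_zero_iff two_ne_zero |>.1 (by nlinarith))
  have harea : area u (w ε) = ε ^ 2 * (u.1 ^ 2 + u.2 ^ 2) := by
    simp only [area, wedge, w, halfLength, offset, Prod.smul_mk, smul_eq_mul]
    ring
  rw [harea]
  exact mul_pos (pow_pos hpos 2) hnorm

lemma IsMaximal.area_pos (h : IsMaximal K u w) (hint : (interior K).Nonempty) (hu : u ≠ 0) :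
    0 < area u w :=
  have ⟨_, hw', hpos⟩ := exists_fits_area_pos hint hu
  hpos.trans_le (h.2 hw')

lemma le_mul_convexComb {m x y x' y' a b : ℝ} (hm : 0 ≤ m) (hx : 0 ≤ x) (hy : 0 ≤ y)
    (hx' : 0 ≤ x') (hy' : 0 ≤ y') (h : m ≤ x * y) (h' : m ≤ x' * y') (ha : 0 ≤ a) (hb : 0 ≤ b)
    (hab : a + b = 1) : m ≤ (a * x + b * x') * (a * y + b * y') := by
  have hcross : 2 * m ≤ x * y' + x' * y := by
    refine abs_le_of_sq_le_sq' ?_ (by positivity) |>.2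
    calc (2 * m) ^ 2 = 4 * (m * m) := by ring
      _ ≤ 4 * ((x * y) * (x' * y')) := by gcongr
      _ ≤ (x * y' + x' * y) ^ 2 := by nlinarith [sq_nonneg (x * y' - x' * y)]
  calc m = a ^ 2 * m + b ^ 2 * m + a * b * (2 * m) := by
        obtain rfl : b = 1 - a := by linarith
        ring
    _ ≤ a ^ 2 * (x * y) + b ^ 2 * (x' * y') + a * b * (x * y' + x' * y) := by gcongr
    _ = (a * x + b * x') * (a * y + b * y') := by ring

lemma wedge_offset_pos (hlen : 0 ≤ w.halfLength) (harea : 0 < area u w) :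
    0 < wedge u w.offset :=
  pos_of_mul_pos_right harea hlen

-- The area is quasiconcave along chord triples: its square root is a geometric mean.
lemma convex_setOf_isMaximal (hK : Convex ℝ K) (hint : (interior K).Nonempty) (hu : u ≠ 0) :
    Convex ℝ {w | IsMaximal K u w} := by
  intro w hw w' hw' a b ha hb hab
  refine ⟨hw.1.convexComb hK hw'.1 ha hb hab, fun w'' hw'' => (hw.2 hw'').trans ?_⟩
  have hpos := hw.area_pos hint hu
  have hpos' := hw'.area_pos hint hu
  have hwedge : wedge u (a • w + b • w').offset =
      a * wedge u w.offset + b * wedge u w'.offset := by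
    simp only [wedge, offset, Prod.fst_add, Prod.snd_add, Prod.smul_fst, Prod.smul_snd,
      smul_eq_mul]
    ring
  refine (le_mul_convexComb hpos.le hw.1.1 (wedge_offset_pos hw.1.1 hpos).le hw'.1.1
    (wedge_offset_pos hw'.1.1 hpos').le le_rfl (hw'.2 hw.1) ha hb hab).trans_eq ?_
  rw [area, hwedge]
  rfl

-- Turning a direction into its opposite flips the sign of the shift, so the directions with a
-- nonpositive and with a nonnegative maximal shift meet.
lemma exists_isMaximal_shift_eq_zero (hK : IsConvexBody K) :
    ∃ u w, IsMaximal K u w ∧ 0 < area u w ∧ w.shift = 0 := by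
  let A : Set (ℝ × ℝ) := Prod.fst ''
    ({z | z.1 ∈ sphere 0 1 ∧ IsMaximal K z.1 z.2} ∩ {z | z.2.shift ≤ 0})
  have hshift : Continuous fun z : (ℝ × ℝ) × ChordTriple => z.2.shift :=
    continuous_snd.snd.snd.snd
  have hA : IsClosed A := (((isCompact_setOf_isMaximal hK).inter_right
    (isClosed_le hshift continuous_const)).image continuous_fst).isClosed
  have hcover : sphere 0 1 ⊆ A ∪ -A := fun u hu => by
    obtain ⟨w, hw⟩ := exists_isMaximal hK.1 (hK.2.2.mono interior_subset)
      (mem_sphere_zero_iff_norm.1 hu)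
    have hneg : -u ∈ sphere (0 : ℝ × ℝ) 1 := by simpa using hu
    exact (le_total w.shift 0).imp (fun h => ⟨(u, w), ⟨⟨hu, hw⟩, h⟩, rfl⟩)
      (fun h => ⟨(-u, flip w), ⟨⟨hneg, hw.neg_flip⟩, neg_nonpos.2 h⟩, rfl⟩)
  have hrank : 1 < Module.rank ℝ (ℝ × ℝ) := by
    simp [one_add_one_eq_two]
  obtain ⟨_, hu, ⟨⟨u, w⟩, ⟨⟨-, hw⟩, hle⟩, rfl⟩, ⟨⟨_, w'⟩, ⟨⟨-, hw'⟩, hge⟩, rfl⟩⟩ :=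
    sphere_inter_inter_neg_nonempty hrank hA hcover
  have hflip : IsMaximal K u (flip w') := neg_neg u ▸ hw'.neg_flip
  have hu0 : u ≠ 0 := ne_of_mem_sphere hu one_ne_zero
  obtain ⟨a, b, ha, hb, hab, hzero⟩ : (0 : ℝ) ∈ segment ℝ w.shift (flip w').shift := by
    have hge' : 0 ≤ (flip w').shift := neg_nonneg.2 hge
    exact segment_eq_Icc (hle.trans hge') ▸ ⟨hle, hge'⟩
  have hmax : IsMaximal K u (a • w + b • flip w') :=
    convex_setOf_isMaximal hK.2.1 hK.2.2 hu0 hw hflip ha hb hab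
  exact ⟨u, _, hmax, hmax.area_pos hK.2.2 hu0, hzero⟩

/-- The affine map taking the hexagon `hexagon` to the hexagon spanned by a chord triple with
vanishing shift. -/
def frame (u : ℝ × ℝ) (w : ChordTriple) : ℝ × ℝ →ᵃ[ℝ] ℝ × ℝ :=
  ((LinearMap.toSpanSingleton ℝ (ℝ × ℝ) ((2 * w.halfLength) • u)).coprod
    (LinearMap.toSpanSingleton ℝ (ℝ × ℝ) (w.offset + w.halfLength • u))).toAffineMap +
  AffineMap.const ℝ (ℝ × ℝ) w.center

lemma frame_apply (u : ℝ × ℝ) (w : ChordTriple) (s t : ℝ) :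
    frame u w (s, t) =
      s • (2 * w.halfLength) • u + t • (w.offset + w.halfLength • u) + w.center := rfl

lemma frame_surjective (hpos : 0 < area u w) : Function.Surjective (frame u w) := by
  intro x
  have hlen : w.halfLength ≠ 0 := left_ne_zero_of_mul hpos.ne'
  have hwedge : wedge u w.offset ≠ 0 := right_ne_zero_of_mul hpos.ne'
  let y := x - w.center
  let t := wedge u y / wedge u w.offset
  let s := (wedge y w.offset / wedge u w.offset - t * w.halfLength) / (2 * w.halfLength)
  have hs : s * (2 * w.halfLength) + t * w.halfLength = wedge y w.offset / wedge u w.offset := by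
    simp only [s]
    field_simp
    ring
  refine ⟨(s, t), ?_⟩
  calc frame u w (s, t)
      = (s * (2 * w.halfLength) + t * w.halfLength) • u + t • w.offset + w.center := by
        rw [frame_apply]
        module
    _ = (wedge u w.offset)⁻¹ • (wedge y w.offset • u + wedge u y • w.offset) + w.center := by
        rw [hs]
        simp only [t, div_eq_inv_mul]
        module
    _ = x := by rw [← wedge_smul, inv_smul_smul₀ hwedge, sub_add_cancel]

lemma hexagon_subset_preimage_frame (hK : Convex ℝ K) (hw : Fits K u w) (hshift : w.shift = 0) :
    hexagon ⊆ frame u w ⁻¹' K := by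
  have key (i : Fin 6) (s t : ℝ) (h : frame u w (s, t) = vertex u w i) :
      (s, t) ∈ frame u w ⁻¹' K := by
    rw [mem_preimage, h]
    exact hw.2 i
  refine hexagon_subset (hK.affine_preimage _) (key 2 _ _ ?_) (key 0 _ _ ?_) (key 1 _ _ ?_)
    (key 3 _ _ ?_) (key 5 _ _ ?_) (key 4 _ _ ?_) <;>
  · simp only [frame_apply, vertex, Matrix.cons_val, hshift]
    module

lemma IsMaximal.chordBound_preimage_frame (hw : IsMaximal K u w) (hpos : 0 < area u w) :
    ChordBound (frame u w ⁻¹' K) := by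
  rintro h d l hl ⟨xm, hm, hm'⟩ ⟨xt, ht, ht'⟩ ⟨xb, hb, hb'⟩
  let w' : ChordTriple :=
    (frame u w ((xt + xb + l) / 2, h),
      ((xt - xb) / 2) • (2 * w.halfLength) • u + d • (w.offset + w.halfLength • u),
      l * w.halfLength, (xm + l - (xt + xb + l) / 2) * (2 * w.halfLength))
  have hvertex : vertex u w' = ![frame u w (xt + l, h + d), frame u w (xt, h + d),
      frame u w (xm + 2 * l, h), frame u w (xm, h),
      frame u w (xb + l, h - d), frame u w (xb, h - d)] := by
    ext1 i
    fin_cases i <;> simp [vertex, w', frame_apply, center, offset, halfLength, shift] <;> module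
  have hfits : Fits K u w' := by
    refine ⟨mul_nonneg hl hw.1.1, fun i => ?_⟩
    rw [hvertex]
    fin_cases i <;> assumption
  have harea : area u w' = l * d * area u w := by
    simp only [area, wedge, w', halfLength, offset, Prod.fst_add, Prod.snd_add, Prod.smul_fst,
      Prod.smul_snd, smul_eq_mul]
    ring
  exact le_of_mul_le_mul_right (by simpa only [harea, one_mul] using hw.2 hfits) hpos

lemma IsMaximal.coversWith_half_seven (hK : Convex ℝ K) (hw : IsMaximal K u w)
    (hpos : 0 < area u w) (hshift : w.shift = 0) : CoversWith K (1 / 2) 7 := by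
  have hS : Convex ℝ (frame u w ⁻¹' K) := hK.affine_preimage _
  have hhex : hexagon ⊆ frame u w ⁻¹' K := hexagon_subset_preimage_frame hK hw.1 hshift
  have hstar := subset_hexagram_of_chordBound hS hhex (hw.chordBound_preimage_frame hpos)
  rw [← image_preimage_eq K (frame_surjective hpos)]
  exact (coversWith_half_seven_of_hexagon_subset hS hhex hstar).image _

end ChordTriple

end ChordTriples

section Plane

variable {V : Type*} [NormedAddCommGroup V] [NormedSpace ℝ V]

lemma IsConvexBody.coversWith_half_seven (hV : finrank ℝ V = 2) {K : Set V}
    (hK : IsConvexBody K) : CoversWith K (1 / 2) 7 := by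
  have : FiniteDimensional ℝ V := .of_finrank_pos (by omega)
  let e : V ≃L[ℝ] ℝ × ℝ := .ofFinrankEq (by simp [hV])
  have hK' : IsConvexBody (e '' K) := hK.image e
  obtain ⟨u, w, hw, hpos, hshift⟩ := ChordTriple.exists_isMaximal_shift_eq_zero hK'
  exact (coversWith_image_iff e.toLinearEquiv.toAffineEquiv).1
    (hw.coversWith_half_seven hK'.2.1 hpos hshift)

lemma IsConvexBody.coin_le_fourteen (hV : finrank ℝ V = 2) {K : Set V} (hK : IsConvexBody K) :
    coin K ≤ 14 := by
  have := coin_le_of_coversWith (by norm_num) (by norm_num) le_rfl (hK.coversWith_half_seven hV)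
  norm_num at this
  exact this

lemma coin_unitDisk : coin (closedBall (0 : ℂ) 1) = 14 := by
  have hbody : IsConvexBody (closedBall (0 : ℂ) 1) :=
    ⟨isCompact_closedBall 0 1, convex_closedBall 0 1,
      ⟨0, ball_subset_interior_closedBall (mem_ball_self one_pos)⟩⟩
  have hV : finrank ℝ ℂ = 2 := Complex.finrank_real_complex
  have hseven : gammaC 7 (closedBall (0 : ℂ) 1) ≤ 1 / 2 :=
    gammaC_le_of_coversWith one_half_pos (hbody.coversWith_half_seven hV)
  exact (hbody.coin_le_fourteen hV).antisymm
    (le_coin ⟨7, by norm_num, hseven⟩ fun _ => fourteen_le_div_one_sub_gammaC_unitDisk)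

lemma coin_closedBall {V : Type*} [NormedAddCommGroup V] [InnerProductSpace ℝ V]
    (hV : finrank ℝ V = 2) (c : V) {r : ℝ} (hr : 0 < r) : coin (closedBall c r) = 14 := by
  have : FiniteDimensional ℝ V := .of_finrank_pos (by omega)
  let f : ℂ ≃ₗᵢ[ℝ] V :=
    Complex.isometryOfOrthonormal ((stdOrthonormalBasis ℝ V).reindex (finCongr hV))
  let e : ℂ ≃ᵃ[ℝ] V := (f.toLinearEquiv.trans (.smulOfNeZero ℝ V r hr.ne')).toAffineEquiv.trans
    (AffineEquiv.constVAdd ℝ V c)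
  have he : e '' closedBall 0 1 = closedBall c r := by
    calc e '' closedBall 0 1 = c +ᵥ r • f '' closedBall 0 1 := by
          simp only [← image_vadd, ← image_smul, image_image]
          rfl
      _ = closedBall c r := by rw [f.image_closedBall, map_zero, affinity_unitClosedBall hr.le]
  rw [← he, coin_image, coin_unitDisk]

end Plane

theorem coin_disk_max_general {V : Type*} [NormedAddCommGroup V] [InnerProductSpace ℝ V]
    (hV : finrank ℝ V = 2) (c : V) {r : ℝ} (hr : 0 < r) :
    coin (closedBall c r) = 14 ∧ ∀ K : Set V, IsConvexBody K → coin K ≤ 14 :=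
  ⟨coin_closedBall hV c hr, fun _ hK => hK.coin_le_fourteen hV⟩

/-- the circular disk maximizes the covering index in the plane. -/
theorem coin_disk_max :
    coin (Metric.closedBall (0 : EuclideanSpace ℝ (Fin 2)) 1) = 14 ∧
    ∀ K : Set (EuclideanSpace ℝ (Fin 2)), IsConvexBody K → coin K ≤ 14 :=
  coin_disk_max_general finrank_euclideanSpace_fin 0 one_pos
end

section
/- Let K_i ⊆ ℝ^{d_i} (i = 1, …, n) be convex bodies each of which is tightly covered. Then their Cartesian product K_1 × ⋯ × K_n ⊆ ℝ^{d_1} × ⋯ × ℝ^{d_n} is tightly covered. -/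
open Set Pointwise

/-! A homothet of a product is the product of homothets of the factors. Hence products of covers are
covers, so `N_λ(∏ Kᵢ) ≤ ∏ N_λ(Kᵢ)`. On the other hand, choosing in each `Kᵢ` a family of `N_λ(Kᵢ)`
points, no two in a common homothet, yields `∏ N_λ(Kᵢ)` points of the product: two of them differ in
some coordinate, and projecting a common homothet to that coordinate would give a common homothet
there. Any `N_λ(∏ Kᵢ)` of these points will do. -/

/-- The family `p` is *homothet-separated* for `K` and the ratio `lam` if no two of its members lie
in a common homothet `lam • K + t`. `K` is tightly covered if it contains such a family of size
`N_λ(K)` for every ratio; an arbitrary index type is allowed here so that one can form products. -/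
def HomothetSeparated {V κ : Type*} [Add V] [SMul ℝ V] (lam : ℝ) (K : Set V) (p : κ → V) : Prop :=
  Pairwise fun i j => ∀ t : V,
    ¬(p i ∈ (fun x => lam • x + t) '' K ∧ p j ∈ (fun x => lam • x + t) '' K)

section Homothets

variable {ι : Type*} {V : ι → Type*} [∀ i, Add (V i)] [∀ i, SMul ℝ (V i)]

theorem image_smul_add_univ_pi (lam : ℝ) (t : ∀ i, V i) (K : ∀ i, Set (V i)) :
    (fun x => lam • x + t) '' univ.pi K = univ.pi fun i => (fun x => lam • x + t i) '' K i :=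
  piMap_image_univ_pi (fun i x => lam • x + t i) K

theorem HomothetSeparated.pi {lam : ℝ} {K : ∀ i, Set (V i)} {κ : ι → Type*} {p : ∀ i, κ i → V i}
    (hp : ∀ i, HomothetSeparated lam (K i) (p i)) :
    HomothetSeparated lam (univ.pi K) (Pi.map p) := by
  rintro k l hkl t ⟨hk, hl⟩
  rw [image_smul_add_univ_pi] at hk hl
  obtain ⟨i, hi⟩ := Function.ne_iff.1 hkl
  exact hp i hi (t i) ⟨hk i (mem_univ i), hl i (mem_univ i)⟩

end Homothets

section Covers

variable {V : Type*} [NormedAddCommGroup V] [NormedSpace ℝ V] {K : Set V} {lam : ℝ}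

theorem coversWith_card_of_subset_iUnion {κ : Type*} [Fintype κ] {t : κ → V}
    (h : K ⊆ ⋃ k, (fun x => lam • x + t k) '' K) : CoversWith K lam (Fintype.card κ) :=
  let e := (Fintype.equivFin κ).symm
  ⟨t ∘ e, h.trans_eq (e.iSup_comp (g := fun k => (fun x => lam • x + t k) '' K)).symm⟩

theorem exists_coversWith_of_totallyBounded (hK : TotallyBounded K) (hint : (interior K).Nonempty)
    (hlam : lam ≠ 0) : ∃ m, CoversWith K lam m := by
  obtain ⟨a, ha⟩ := hint
  have hU : (fun u : V => lam⁻¹ • u + a) ⁻¹' K ∈ nhds 0 := by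
    have hcont : Continuous fun u : V => lam⁻¹ • u + a := by fun_prop
    exact hcont.continuousAt.preimage_mem_nhds (by simpa using mem_interior_iff_mem_nhds.1 ha)
  obtain ⟨s, hs, hcover⟩ := totallyBounded_iff_subset_finite_iUnion_nhds_zero.1 hK _ hU
  have : Fintype s := hs.fintype
  refine ⟨_, coversWith_card_of_subset_iUnion (t := fun y : s => (y : V) - lam • a) ?_⟩
  intro x hx
  obtain ⟨y, hy, u, hu, rfl⟩ := mem_iUnion₂.1 (hcover hx)
  refine mem_iUnion.2 ⟨⟨y, hy⟩, lam⁻¹ • u + a, hu, ?_⟩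
  simp [hlam, add_comm]

theorem covN_le_of_coversWith {m : ℕ} (h : CoversWith K lam m) : covN lam K ≤ m :=
  Nat.sInf_le h

theorem coversWith_covN (h : ∃ m, CoversWith K lam m) : CoversWith K lam (covN lam K) :=
  Nat.sInf_mem h

end Covers

section Products

variable {ι : Type*} [Fintype ι] {V : ι → Type*} [∀ i, NormedAddCommGroup (V i)]
  [∀ i, NormedSpace ℝ (V i)] {K : ∀ i, Set (V i)}

theorem CoversWith.pi {lam : ℝ} {m : ι → ℕ} (h : ∀ i, CoversWith (K i) lam (m i)) :
    CoversWith (univ.pi K) lam (∏ i, m i) := by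
  classical
  choose t ht using h
  have hcover : univ.pi K ⊆ ⋃ k, (fun x => lam • x + Pi.map t k) '' univ.pi K :=
    calc univ.pi K
      _ ⊆ univ.pi fun i => ⋃ j, (fun x => lam • x + t i j) '' K i := pi_mono fun i _ => ht i
      _ = ⋃ k : ∀ i, Fin (m i), univ.pi fun i => (fun x => lam • x + t i (k i)) '' K i :=
        (iUnion_univ_pi _).symm
      _ = ⋃ k, (fun x => lam • x + Pi.map t k) '' univ.pi K := by
        simp only [image_smul_add_univ_pi, Pi.map_apply]
  simpa using coversWith_card_of_subset_iUnion hcover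

theorem covN_univ_pi_le {lam : ℝ} (h : ∀ i, ∃ m, CoversWith (K i) lam m) :
    covN lam (univ.pi K) ≤ ∏ i, covN lam (K i) :=
  covN_le_of_coversWith (CoversWith.pi fun i => coversWith_covN (h i))

theorem tightlyCovered_directSum_general
    (hK : ∀ i, ∀ lam : ℝ, 0 < lam → lam < 1 → ∃ m, CoversWith (K i) lam m)
    (htight : ∀ i, TightlyCovered (K i)) : TightlyCovered (univ.pi K) := by
  classical
  intro lam hpos hlt
  choose p hpK hp using fun i => htight i lam hpos hlt
  have hsep : HomothetSeparated lam (univ.pi K) (Pi.map p) :=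
    HomothetSeparated.pi fun i j k => hp i j k
  have hcard : Fintype.card (Fin (covN lam (univ.pi K))) ≤
      Fintype.card (∀ i, Fin (covN lam (K i))) := by
    simpa using covN_univ_pi_le fun i => hK i lam hpos hlt
  obtain ⟨e⟩ := Function.Embedding.nonempty_of_card_le hcard
  exact ⟨Pi.map p ∘ e, fun k i _ => hpK i (e k i),
    fun _ _ hkl => hsep (e.injective.ne hkl)⟩

end Products

/-- a Cartesian product of tightly covered convex bodies is
tightly covered. -/
theorem tightlyCovered_directSum (n : ℕ) (d : Fin n → ℕ)
    (K : ∀ i, Set (Fin (d i) → ℝ)) (hK : ∀ i, IsConvexBody (K i))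
    (htight : ∀ i, TightlyCovered (K i)) :
    TightlyCovered (Set.univ.pi K) :=
  tightlyCovered_directSum_general
    (fun i _ hpos _ =>
      exists_coversWith_of_totallyBounded (hK i).1.totallyBounded (hK i).2.2 hpos.ne') htight
end

section
/- Let d ≥ 2, let K ⊆ ℝ^d be a convex body and let 0 < λ < 1. Then wcoin(K) ≤ N_λ(K)/(1 − λ). Moreover, if K is o-symmetric (K = −K), then N_λ(K)/(1 − λ) ≤ ((1+λ)^d/(λ^d(1−λ)))·d·(ln d + ln ln d + 5), and for an arbitrary convex body K, N_λ(K)/(1 − λ) ≤ (1/(λ^d(1−λ)))·(C(2d,d)^{1/d} − 1 + λ)^d·d·(ln d + ln ln d + 5), where C(2d,d) denotes the binomial coefficient (2d choose d). -/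
open Set Pointwise

/-!
Write `d` for the dimension. For `0 < η ≤ 1 / d`, Helly's theorem yields a point `c` with
`c - η • L ⊆ L`. Averaging the covariogram of the part of `D = K - η • L` not yet covered shows that
some translate of `L` covers a proportion `vol L / vol (D - L)` of it. After `d * log η⁻¹` times
`vol (D - L) / vol L` such greedy steps, a maximal packing of translates of `-(η • L)` in the
residual has few members; the translates of `(1 + η) • L` by the greedy centres, together with
those by the packing centres shifted by `-c`, cover `K` (Rogers–Zong). Applied to
`(1 + η)⁻¹ • L` with `η = 1 / (d log d)` (`η = 1 / 2` if `d = 2`), this covers `K` by at most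
`vol (K - L) / vol L` times `d (log d + log log d + 5)` translates of `L`.

It remains to bound `vol (K - λ • K)`. It is `(1 + λ) ^ d * vol K` for symmetric `K`. In general,
`(K - λ • K) + (1 - λ) • (-K) ⊆ K - K`, so the Brunn–Minkowski inequality, a consequence of
Prékopa–Leindler, reduces the bound to the Rogers–Shephard inequality
`vol (K - K) ≤ (2d choose d) * vol K`. The latter follows by integrating the covariogram of `K`,
whose `d`-th root is at least `(1 - r) * (vol K) ^ (1 / d)` on `r • (K - K)`.
-/

section PrekopaLeindler

open MeasureTheory Measure ENNReal

theorem volume_add_volume_le_volume_add_of_isCompact {A B : Set ℝ} (hA : IsCompact A)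
    (hB : IsCompact B) (hA₀ : A.Nonempty) (hB₀ : B.Nonempty) :
    volume A + volume B ≤ volume (A + B) := by
  obtain ⟨a, ha, ha_max⟩ := hA.exists_isGreatest hA₀
  obtain ⟨b, hb, hb_min⟩ := hB.exists_isLeast hB₀
  have disjoint : AEDisjoint volume (b +ᵥ A) (a +ᵥ B) := by
    refine measure_mono_null (t := {a + b}) ?_ (by simp)
    rintro _ ⟨⟨x, hx, rfl⟩, ⟨y, hy, hxy⟩⟩
    have := ha_max hx
    have := hb_min hy
    simp only [vadd_eq_add, mem_singleton_iff] at hxy ⊢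
    linarith
  calc volume A + volume B = volume ((b +ᵥ A) ∪ (a +ᵥ B)) := by
        rw [measure_union₀ (hB.vadd a).nullMeasurableSet disjoint, measure_vadd, measure_vadd]
    _ ≤ volume (A + B) := by
        refine measure_mono (union_subset ?_ (vadd_set_subset_add ha))
        exact add_comm B A ▸ vadd_set_subset_add hb

theorem volume_add_volume_le_volume_add {A B : Set ℝ} (hA : MeasurableSet A)
    (hB : MeasurableSet B) (hA₀ : A.Nonempty) (hB₀ : B.Nonempty) :
    volume A + volume B ≤ volume (A + B) := by
  obtain ⟨a, ha⟩ := hA₀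
  obtain ⟨b, hb⟩ := hB₀
  rw [hA.measure_eq_iSup_isCompact, hB.measure_eq_iSup_isCompact]
  simp only [iSup_and']
  refine ENNReal.biSup_add_biSup_le' ⟨∅, by simp⟩ ⟨∅, by simp⟩ ?_
  rintro K ⟨hKA, hK⟩ L ⟨hLB, hL⟩
  calc volume K + volume L ≤ volume (insert a K) + volume (insert b L) := by
        gcongr <;> exact subset_insert _ _
    _ ≤ volume (insert a K + insert b L) :=
        volume_add_volume_le_volume_add_of_isCompact (hK.insert a) (hL.insert b)
          (insert_nonempty a K) (insert_nonempty b L)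
    _ ≤ volume (A + B) :=
        measure_mono (add_subset_add (insert_subset ha hKA) (insert_subset hb hLB))

theorem lintegral_eq_lintegral_meas_ofReal_lt {α : Type*} [MeasurableSpace α] (μ : Measure α)
    [SFinite μ] {f : α → ℝ≥0∞} (hf : Measurable f) :
    ∫⁻ x, f x ∂μ = ∫⁻ s in Ioi (0 : ℝ), μ {x | ENNReal.ofReal s < f x} := by
  have volume_eq (c : ℝ≥0∞) : volume.restrict (Ioi 0) {s | ENNReal.ofReal s < c} = c := by
    rw [Measure.restrict_apply (measurableSet_lt (by fun_prop) measurable_const)]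
    induction c with
    | top => simp
    | coe c =>
      have : {s | ENNReal.ofReal s < c} ∩ Ioi 0 = Ioo 0 (c : ℝ) := by
        ext s
        simp +contextual [ENNReal.ofReal_lt_coe_iff, and_comm, le_of_lt]
      simp [this]
  have meas : MeasurableSet {p : α × ℝ | ENNReal.ofReal p.2 < f p.1} :=
    measurableSet_lt (by fun_prop) (by fun_prop)
  calc ∫⁻ x, f x ∂μ = ∫⁻ x, volume.restrict (Ioi 0) {s | ENNReal.ofReal s < f x} ∂μ := by
        simp only [volume_eq]
    _ = (μ.prod (volume.restrict (Ioi 0))) {p | ENNReal.ofReal p.2 < f p.1} :=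
        (Measure.prod_apply meas).symm
    _ = _ := Measure.prod_apply_symm meas

theorem ennreal_rpow_mul_rpow_le_add {p q : ℝ} (hp : 0 < p) (hq : 0 < q) (hpq : p + q = 1)
    (a b : ℝ≥0∞) : a ^ p * b ^ q ≤ ENNReal.ofReal p * a + ENNReal.ofReal q * b := by
  have conj : p⁻¹.HolderConjugate q⁻¹ := by
    refine Real.holderConjugate_iff.2 ⟨(one_lt_inv₀ hp).2 (by linarith), by simpa using hpq⟩
  simpa [← ENNReal.rpow_mul, hp.ne', hq.ne', ofReal_inv_of_pos, hp, hq, div_eq_mul_inv, mul_comm]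
    using ENNReal.young_inequality (a ^ p) (b ^ q) conj

/-- The Prékopa–Leindler inequality holds for the measure `μ`. Stating it as a property of `μ`
lets it be transported along products and linear isomorphisms. -/
def IsPrekopaLeindler {E : Type*} [AddCommGroup E] [Module ℝ E] [MeasurableSpace E]
    (μ : Measure E) : Prop :=
  ∀ ⦃a b : ℝ⦄, 0 < a → 0 < b → a + b = 1 → ∀ ⦃f g h : E → ℝ≥0∞⦄,
    Measurable f → Measurable g → Measurable h →
    (∀ x y, f x ^ a * g y ^ b ≤ h (a • x + b • y)) →
    (∫⁻ x, f x ∂μ) ^ a * (∫⁻ x, g x ∂μ) ^ b ≤ ∫⁻ x, h x ∂μ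

section Real

variable {a b : ℝ} {f g h : ℝ → ℝ≥0∞}

theorem ofReal_mul_volume_lt_add_le_volume_lt (ha : 0 < a) (hb : 0 < b) (hab : a + b = 1)
    (hf : Measurable f) (hg : Measurable g)
    (hfgh : ∀ x y, f x ^ a * g y ^ b ≤ h (a • x + b • y)) {c : ℝ≥0∞}
    (hcf : c < ⨆ x, f x) (hcg : c < ⨆ x, g x) :
    ENNReal.ofReal a * volume {x | c < f x} + ENNReal.ofReal b * volume {x | c < g x} ≤
      volume {x | c < h x} := by
  have c_eq : c ^ a * c ^ b = c := by
    rw [← ENNReal.rpow_add_of_nonneg _ _ ha.le hb.le, hab, ENNReal.rpow_one]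
  have smul_add_smul_subset : a • {x | c < f x} + b • {x | c < g x} ⊆ {x | c < h x} := by
    rintro _ ⟨_, ⟨x, hx, rfl⟩, _, ⟨y, hy, rfl⟩, rfl⟩
    calc c = c ^ a * c ^ b := c_eq.symm
      _ < f x ^ a * g y ^ b :=
        ENNReal.mul_lt_mul (ENNReal.rpow_lt_rpow hx ha) (ENNReal.rpow_lt_rpow hy hb)
      _ ≤ h (a • x + b • y) := hfgh x y
  calc ENNReal.ofReal a * volume {x | c < f x} + ENNReal.ofReal b * volume {x | c < g x}
      = volume (a • {x | c < f x}) + volume (b • {x | c < g x}) := by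
        simp [Measure.addHaar_smul, abs_of_pos, ha, hb]
    _ ≤ volume (a • {x | c < f x} + b • {x | c < g x}) :=
        volume_add_volume_le_volume_add
          ((measurableSet_lt measurable_const hf).const_smul₀ a)
          ((measurableSet_lt measurable_const hg).const_smul₀ b)
          (Nonempty.smul_set (lt_iSup_iff.1 hcf)) (Nonempty.smul_set (lt_iSup_iff.1 hcg))
    _ ≤ volume {x | c < h x} := measure_mono smul_add_smul_subset

theorem ofReal_mul_lintegral_add_le_lintegral_of_iSup_eq_one (ha : 0 < a) (hb : 0 < b)
    (hab : a + b = 1) (hf : Measurable f) (hg : Measurable g) (hh : Measurable h)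
    (hfgh : ∀ x y, f x ^ a * g y ^ b ≤ h (a • x + b • y))
    (hf₁ : ⨆ x, f x = 1) (hg₁ : ⨆ x, g x = 1) :
    ENNReal.ofReal a * (∫⁻ x, f x) + ENNReal.ofReal b * (∫⁻ x, g x) ≤ ∫⁻ x, h x := by
  simp only [lintegral_eq_lintegral_meas_ofReal_lt volume, hf, hg, hh]
  rw [← lintegral_const_mul' _ _ ofReal_ne_top, ← lintegral_const_mul' _ _ ofReal_ne_top]
  refine (le_lintegral_add _ _).trans (lintegral_mono fun s => ?_)
  obtain hs | hs := lt_or_ge (ENNReal.ofReal s) 1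
  · exact ofReal_mul_volume_lt_add_le_volume_lt ha hb hab hf hg hfgh (hf₁ ▸ hs) (hg₁ ▸ hs)
  · have hfs (x) : f x ≤ ENNReal.ofReal s := (le_iSup f x).trans (hf₁.trans_le hs)
    have hgs (x) : g x ≤ ENNReal.ofReal s := (le_iSup g x).trans (hg₁.trans_le hs)
    simp [hfs, hgs, not_lt_of_ge]

theorem lintegral_rpow_mul_lintegral_rpow_le_of_iSup_ne_top (ha : 0 < a) (hb : 0 < b)
    (hab : a + b = 1) (hf : Measurable f) (hg : Measurable g) (hh : Measurable h)
    (hfgh : ∀ x y, f x ^ a * g y ^ b ≤ h (a • x + b • y))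
    (hf_top : ⨆ x, f x ≠ ∞) (hg_top : ⨆ x, g x ≠ ∞) :
    (∫⁻ x, f x) ^ a * (∫⁻ x, g x) ^ b ≤ ∫⁻ x, h x := by
  obtain hf₀ | hf₀ := eq_or_ne (⨆ x, f x) 0
  · simp [ENNReal.iSup_eq_zero.1 hf₀, ha]
  obtain hg₀ | hg₀ := eq_or_ne (⨆ x, g x) 0
  · simp [ENNReal.iSup_eq_zero.1 hg₀, hb]
  set M := ⨆ x, f x with hM
  set N := ⨆ x, g x with hN
  have mul_rpow_mul_rpow (u v : ℝ≥0∞) :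
      (M⁻¹ * u) ^ a * (N⁻¹ * v) ^ b = (M ^ a * N ^ b)⁻¹ * (u ^ a * v ^ b) := by
    rw [ENNReal.mul_rpow_of_nonneg _ _ ha.le, ENNReal.mul_rpow_of_nonneg _ _ hb.le,
      mul_mul_mul_comm, ENNReal.inv_rpow, ENNReal.inv_rpow,
      ENNReal.mul_inv (by simp [hf₀, hf_top]) (by simp [hg₀, hg_top])]
  have MN_ne_zero : M ^ a * N ^ b ≠ 0 := by simp [hf₀, hg₀, hf_top, hg_top]
  have MN_ne_top : M ^ a * N ^ b ≠ ∞ := by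
    exact ENNReal.mul_ne_top (ENNReal.rpow_ne_top_of_nonneg ha.le hf_top)
      (ENNReal.rpow_ne_top_of_nonneg hb.le hg_top)
  have normalized := ofReal_mul_lintegral_add_le_lintegral_of_iSup_eq_one ha hb hab
    (hf.const_mul M⁻¹) (hg.const_mul N⁻¹) (hh.const_mul (M ^ a * N ^ b)⁻¹)
    (fun x y => by rw [mul_rpow_mul_rpow]; gcongr; exact hfgh x y)
    (by rw [← ENNReal.mul_iSup, ← hM, ENNReal.inv_mul_cancel hf₀ hf_top])
    (by rw [← ENNReal.mul_iSup, ← hN, ENNReal.inv_mul_cancel hg₀ hg_top])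
  have := (ennreal_rpow_mul_rpow_le_add ha hb hab _ _).trans normalized
  rwa [lintegral_const_mul _ hf, lintegral_const_mul _ hg, lintegral_const_mul _ hh,
    mul_rpow_mul_rpow,
    ENNReal.mul_le_mul_iff_right (ENNReal.inv_ne_zero.2 MN_ne_top)
      (ENNReal.inv_ne_top.2 MN_ne_zero)] at this

theorem lintegral_eq_iSup_lintegral_min_natCast {α : Type*} [MeasurableSpace α] {μ : Measure α}
    {f : α → ℝ≥0∞} (hf : Measurable f) : ∫⁻ x, f x ∂μ = ⨆ n : ℕ, ∫⁻ x, min (f x) n ∂μ := by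
  rw [← lintegral_iSup (fun n => hf.min measurable_const)
    fun m n hmn x => min_le_min_left _ (by exact_mod_cast hmn)]
  simp [← inf_iSup_eq, ENNReal.iSup_natCast]

theorem isPrekopaLeindler_volume_real : IsPrekopaLeindler (volume : Measure ℝ) := by
  intro a b ha hb hab f g h hf hg hh hfgh
  have bounded (m n : ℕ) :
      (∫⁻ x, min (f x) m) ^ a * (∫⁻ x, min (g x) n) ^ b ≤ ∫⁻ x, h x := by
    have iSup_min_ne_top (u : ℝ → ℝ≥0∞) (k : ℕ) : ⨆ x, min (u x) k ≠ ∞ :=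
      ((iSup_le fun x => min_le_right _ _).trans_lt (natCast_lt_top k)).ne
    refine lintegral_rpow_mul_lintegral_rpow_le_of_iSup_ne_top ha hb hab
      (hf.min measurable_const) (hg.min measurable_const) hh (fun x y => le_trans ?_ (hfgh x y))
      (iSup_min_ne_top f m) (iSup_min_ne_top g n)
    gcongr <;> exact min_le_left _ _
  have rpow_iSup {r : ℝ} (hr : 0 < r) (u : ℕ → ℝ≥0∞) : (⨆ n, u n) ^ r = ⨆ n, u n ^ r :=
    (ENNReal.orderIsoRpow r hr).map_iSup u
  rw [lintegral_eq_iSup_lintegral_min_natCast hf, lintegral_eq_iSup_lintegral_min_natCast hg,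
    rpow_iSup ha, rpow_iSup hb]
  simp only [ENNReal.iSup_mul, ENNReal.mul_iSup]
  exact iSup_le fun m => iSup_le fun n => bounded n m

end Real

namespace IsPrekopaLeindler

variable {E F : Type*} [AddCommGroup E] [Module ℝ E] [MeasurableSpace E]
  [AddCommGroup F] [Module ℝ F] [MeasurableSpace F] {μ : Measure E} {ν : Measure F}

protected theorem smul (hμ : IsPrekopaLeindler μ) {c : ℝ≥0∞} (hc₀ : c ≠ 0) (hc : c ≠ ∞) :
    IsPrekopaLeindler (c • μ) := by
  intro a b ha hb hab f g h hf hg hh hfgh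
  have c_eq : c ^ a * c ^ b = c := by rw [← ENNReal.rpow_add _ _ hc₀ hc, hab, ENNReal.rpow_one]
  simp only [lintegral_smul_measure, smul_eq_mul, ENNReal.mul_rpow_of_nonneg _ _ ha.le,
    ENNReal.mul_rpow_of_nonneg _ _ hb.le, mul_mul_mul_comm, c_eq]
  gcongr
  exact hμ ha hb hab hf hg hh hfgh

protected theorem map (hμ : IsPrekopaLeindler μ) {φ : E →ₗ[ℝ] F} (hφ : Measurable φ) :
    IsPrekopaLeindler (μ.map φ) := by
  intro a b ha hb hab f g h hf hg hh hfgh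
  rw [lintegral_map hf hφ, lintegral_map hg hφ, lintegral_map hh hφ]
  refine hμ ha hb hab (hf.comp hφ) (hg.comp hφ) (hh.comp hφ) fun x y => ?_
  simpa using hfgh (φ x) (φ y)

protected theorem prod [SFinite ν] (hμ : IsPrekopaLeindler μ) (hν : IsPrekopaLeindler ν) :
    IsPrekopaLeindler (μ.prod ν) := by
  intro a b ha hb hab f g h hf hg hh hfgh
  rw [lintegral_prod _ hf.aemeasurable, lintegral_prod _ hg.aemeasurable,
    lintegral_prod _ hh.aemeasurable]
  refine hμ ha hb hab hf.lintegral_prod_right' hg.lintegral_prod_right'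
    hh.lintegral_prod_right' fun x₁ x₂ => ?_
  exact hν ha hb hab (hf.comp measurable_prodMk_left) (hg.comp measurable_prodMk_left)
    (hh.comp measurable_prodMk_left) fun y₁ y₂ => hfgh (x₁, y₁) (x₂, y₂)

end IsPrekopaLeindler

section Haar

variable {E F : Type*}
  [NormedAddCommGroup E] [NormedSpace ℝ E] [MeasurableSpace E] [BorelSpace E]
  [NormedAddCommGroup F] [NormedSpace ℝ F] [FiniteDimensional ℝ F] [MeasurableSpace F]
  [BorelSpace F]

theorem IsPrekopaLeindler.of_continuousLinearEquiv {μ : Measure E} [μ.IsAddHaarMeasure]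
    (hμ : IsPrekopaLeindler μ) (e : E ≃L[ℝ] F) (ν : Measure F) [ν.IsAddHaarMeasure] :
    IsPrekopaLeindler ν := by
  rw [isAddLeftInvariant_eq_smul ν (μ.map e)]
  refine (hμ.map (φ := e.toLinearMap) e.continuous.measurable).smul ?_ coe_ne_top
  exact_mod_cast (addHaarScalarFactor_pos_of_isAddHaarMeasure ν (μ.map e)).ne'

theorem isPrekopaLeindler_volume_pi :
    ∀ n : ℕ, IsPrekopaLeindler (volume : Measure (Fin n → ℝ))
  | 0 => by
    intro a b _ _ _ f g h _ _ _ hfgh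
    simpa [volume_pi_eq_dirac 0] using hfgh 0 0
  | n + 1 => (isPrekopaLeindler_volume_real.prod (isPrekopaLeindler_volume_pi n)
      ).of_continuousLinearEquiv (Fin.consEquivL ℝ fun _ => ℝ) volume

theorem isPrekopaLeindler_of_isAddHaarMeasure (μ : Measure F) [μ.IsAddHaarMeasure] :
    IsPrekopaLeindler μ :=
  (isPrekopaLeindler_volume_pi (Module.finrank ℝ F)).of_continuousLinearEquiv
    (ContinuousLinearEquiv.ofFinrankEq (by simp)) μ

end Haar

end PrekopaLeindler

section MeasureSumset

open MeasureTheory Measure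

variable {G : Type*} [AddCommGroup G] [MeasurableSpace G] {μ : Measure G} [μ.IsAddLeftInvariant]
  {A B : Set G}

theorem measure_le_measure_add_right (hB : B.Nonempty) : μ A ≤ μ (A + B) := by
  obtain ⟨b, hb⟩ := hB
  calc μ A = μ (b +ᵥ A) := (measure_vadd μ b A).symm
    _ ≤ μ (A + B) := measure_mono (add_comm B A ▸ vadd_set_subset_add hb)

variable [TopologicalSpace G] [IsTopologicalAddGroup G] [IsFiniteMeasureOnCompacts μ]

theorem measureReal_le_measureReal_sub_left (hA : IsCompact A) (hB : IsCompact B)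
    (hB₀ : B.Nonempty) : μ.real A ≤ μ.real (A - B) := by
  rw [sub_eq_add_neg]
  exact ENNReal.toReal_mono (hA.add hB.neg).measure_ne_top (measure_le_measure_add_right hB₀.neg)

theorem measureReal_le_measureReal_sub_right [MeasurableNeg G] [μ.IsNegInvariant]
    (hA : IsCompact A) (hB : IsCompact B) (hA₀ : A.Nonempty) : μ.real B ≤ μ.real (A - B) := by
  rw [sub_eq_add_neg, add_comm, measureReal_def μ B, ← measure_neg]
  exact ENNReal.toReal_mono (hB.neg.add hA).measure_ne_top (measure_le_measure_add_right hA₀)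

end MeasureSumset

section BrunnMinkowski

open MeasureTheory Measure Module

variable {E : Type*} [NormedAddCommGroup E] [NormedSpace ℝ E] [MeasurableSpace E] {μ : Measure E}
  {A B C : Set E}

theorem IsPrekopaLeindler.measure_rpow_mul_measure_rpow_le (hμ : IsPrekopaLeindler μ) {a b : ℝ}
    (ha : 0 < a) (hb : 0 < b) (hab : a + b = 1) (hA : MeasurableSet A) (hB : MeasurableSet B)
    (hC : MeasurableSet C) (hABC : a • A + b • B ⊆ C) : μ A ^ a * μ B ^ b ≤ μ C := by
  have indicator_le (x y : E) :
      A.indicator 1 x ^ a * B.indicator 1 y ^ b ≤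
        C.indicator (1 : E → ENNReal) (a • x + b • y) := by
    by_cases hx : x ∈ A
    · by_cases hy : y ∈ B
      · simp [hx, hy, hABC (add_mem_add (smul_mem_smul_set hx) (smul_mem_smul_set hy))]
      · simp [hy, hb]
    · simp [hx, ha]
  simpa [lintegral_indicator_one, hA, hB, hC] using
    hμ ha hb hab (measurable_one.indicator hA) (measurable_one.indicator hB)
      (measurable_one.indicator hC) indicator_le

variable [BorelSpace E] [FiniteDimensional ℝ E] [μ.IsAddHaarMeasure]

theorem ofReal_add_pow_finrank_le_measure_add {a b : ℝ} (ha : 0 < a) (hb : 0 < b)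
    (hA : IsCompact A) (hB : IsCompact B) (haA : ENNReal.ofReal (a ^ finrank ℝ E) ≤ μ A)
    (hbB : ENNReal.ofReal (b ^ finrank ℝ E) ≤ μ B) :
    ENNReal.ofReal ((a + b) ^ finrank ℝ E) ≤ μ (A + B) := by
  have hab : 0 < a + b := add_pos ha hb
  have one_le_measure_inv_smul {c : ℝ} (hc : 0 < c) (S : Set E) :
      1 ≤ μ (c⁻¹ • S) ↔ ENNReal.ofReal (c ^ finrank ℝ E) ≤ μ S := by
    rw [addHaar_smul_of_nonneg _ (inv_nonneg.2 hc.le), inv_pow,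
      ENNReal.ofReal_inv_of_pos (pow_pos hc _), mul_comm, ← div_eq_mul_inv,
      ENNReal.le_div_iff_mul_le (by simp [hc]) (by simp), one_mul]
  have subset : (a / (a + b)) • a⁻¹ • A + (b / (a + b)) • b⁻¹ • B ⊆ (a + b)⁻¹ • (A + B) := by
    rw [smul_smul, smul_smul, smul_add, div_mul_eq_mul_div, mul_inv_cancel₀ ha.ne',
      div_mul_eq_mul_div, mul_inv_cancel₀ hb.ne', one_div]
  rw [← one_le_measure_inv_smul hab]
  calc 1 ≤ μ (a⁻¹ • A) ^ (a / (a + b)) * μ (b⁻¹ • B) ^ (b / (a + b)) :=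
        one_le_mul
          (ENNReal.one_le_rpow ((one_le_measure_inv_smul ha A).2 haA) (div_pos ha hab))
          (ENNReal.one_le_rpow ((one_le_measure_inv_smul hb B).2 hbB) (div_pos hb hab))
    _ ≤ μ ((a + b)⁻¹ • (A + B)) :=
        (isPrekopaLeindler_of_isAddHaarMeasure μ).measure_rpow_mul_measure_rpow_le
          (div_pos ha hab) (div_pos hb hab) (by field_simp) (hA.smul _).measurableSet
          (hB.smul _).measurableSet ((hA.add hB).smul _).measurableSet subset

theorem measureReal_rpow_add_measureReal_rpow_le [Nontrivial E] (hA : IsCompact A)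
    (hB : IsCompact B) (hA₀ : A.Nonempty) (hB₀ : B.Nonempty) :
    μ.real A ^ (finrank ℝ E : ℝ)⁻¹ + μ.real B ^ (finrank ℝ E : ℝ)⁻¹ ≤
      μ.real (A + B) ^ (finrank ℝ E : ℝ)⁻¹ := by
  have hd : finrank ℝ E ≠ 0 := finrank_pos.ne'
  have hAB : μ (A + B) ≠ ⊤ := (hA.add hB).measure_ne_top
  have root_pow {S : Set E} (hS : IsCompact S) :
      ENNReal.ofReal ((μ.real S ^ (finrank ℝ E : ℝ)⁻¹) ^ finrank ℝ E) = μ S := by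
    rw [Real.rpow_inv_natCast_pow measureReal_nonneg hd, ofReal_measureReal hS.measure_ne_top]
  obtain hA' | hA' := (measureReal_nonneg (μ := μ) (s := A)).eq_or_lt
  · rw [← hA', Real.zero_rpow (by positivity), zero_add]
    exact Real.rpow_le_rpow measureReal_nonneg
      (ENNReal.toReal_mono hAB (add_comm A B ▸ measure_le_measure_add_right hA₀)) (by positivity)
  obtain hB' | hB' := (measureReal_nonneg (μ := μ) (s := B)).eq_or_lt
  · rw [← hB', Real.zero_rpow (by positivity), add_zero]
    exact Real.rpow_le_rpow measureReal_nonneg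
      (ENNReal.toReal_mono hAB (measure_le_measure_add_right hB₀)) (by positivity)
  rw [Real.le_rpow_inv_iff_of_pos (by positivity) measureReal_nonneg (by positivity),
    Real.rpow_natCast, ← ENNReal.ofReal_le_ofReal_iff measureReal_nonneg, ofReal_measureReal hAB]
  exact ofReal_add_pow_finrank_le_measure_add (by positivity) (by positivity) hA hB
    (root_pow hA).le (root_pow hB).le

end BrunnMinkowski

section Covariogram

open MeasureTheory

variable {G : Type*} [AddCommGroup G] [MeasurableSpace G] [MeasurableAdd₂ G] [MeasurableNeg G]
  {μ : Measure G} {A B : Set G}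

/-- The (cross-)covariogram of `A` and `B`: the measure of the part of `A` covered by the
translate of `B` by `x`. -/
noncomputable def covariogram (μ : Measure G) (A B : Set G) (x : G) : ENNReal :=
  μ (A ∩ (x +ᵥ B))

theorem measurableSet_mem_inter_vadd (hA : MeasurableSet A) (hB : MeasurableSet B) :
    MeasurableSet {p : G × G | p.2 ∈ A ∩ (p.1 +ᵥ B)} := by
  simp only [mem_inter_iff, mem_vadd_set_iff_neg_vadd_mem, vadd_eq_add]
  exact (measurable_snd hA).inter ((measurable_fst.neg.add measurable_snd) hB)

variable [SFinite μ]

theorem measurable_covariogram (hA : MeasurableSet A) (hB : MeasurableSet B) :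
    Measurable (covariogram μ A B) :=
  measurable_measure_prodMk_left (measurableSet_mem_inter_vadd hA hB)

theorem lintegral_covariogram [μ.IsAddLeftInvariant] [μ.IsNegInvariant] (hA : MeasurableSet A)
    (hB : MeasurableSet B) : ∫⁻ x, covariogram μ A B x ∂μ = μ A * μ B := by
  have section_measure (y : G) :
      μ ((fun x => (x, y)) ⁻¹' {p : G × G | p.2 ∈ A ∩ (p.1 +ᵥ B)}) =
        A.indicator (fun _ => μ B) y := by
    by_cases hy : y ∈ A
    · have : (fun x => (x, y)) ⁻¹' {p : G × G | p.2 ∈ A ∩ (p.1 +ᵥ B)} = (y - ·) ⁻¹' B := by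
        ext x
        simp [hy, mem_vadd_set_iff_neg_vadd_mem, neg_add_eq_sub]
      rw [this, (Measure.measurePreserving_sub_left μ y).measure_preimage hB.nullMeasurableSet,
        indicator_of_mem hy]
    · simp [hy]
  have meas := measurableSet_mem_inter_vadd hA hB
  calc ∫⁻ x, covariogram μ A B x ∂μ = (μ.prod μ) {p : G × G | p.2 ∈ A ∩ (p.1 +ᵥ B)} :=
        (Measure.prod_apply meas).symm
    _ = μ A * μ B := by
        rw [Measure.prod_apply_symm meas]
        simp only [section_measure, lintegral_indicator hA, setLIntegral_const, mul_comm]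

end Covariogram

section GreedyCovering

open MeasureTheory

variable {G : Type*} [AddCommGroup G] [MeasurableSpace G] [MeasurableAdd₂ G] [MeasurableNeg G]
  {μ : Measure G} [SFinite μ] [μ.IsAddLeftInvariant] [μ.IsNegInvariant] {A B U : Set G}

theorem exists_mul_div_le_covariogram (hA : MeasurableSet A) (hB : MeasurableSet B)
    (hU : MeasurableSet U) (hA_top : μ A ≠ ⊤) (hB_top : μ B ≠ ⊤) (hU₀ : μ U ≠ 0)
    (hABU : A - B ⊆ U) : ∃ x, μ A * μ B / μ U ≤ covariogram μ A B x := by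
  have support_subset : Function.support (covariogram μ A B) ⊆ U := by
    intro x hx
    obtain ⟨_, ha, b, hb, rfl⟩ := nonempty_of_measure_ne_zero hx
    exact hABU ⟨x +ᵥ b, ha, b, hb, add_sub_cancel_right x b⟩
  have setLIntegral_eq : ∫⁻ x in U, covariogram μ A B x ∂μ = μ A * μ B := by
    rw [setLIntegral_eq_of_support_subset support_subset, lintegral_covariogram hA hB]
  obtain ⟨x, -, hx⟩ := exists_setLAverage_le hU₀ hU.nullMeasurableSet
    (setLIntegral_eq.trans_ne (ENNReal.mul_ne_top hA_top hB_top))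
  rw [setLAverage_eq, setLIntegral_eq] at hx
  exact ⟨x, hx⟩

theorem exists_measureReal_sdiff_vadd_le (hA : MeasurableSet A) (hB : MeasurableSet B)
    (hU : MeasurableSet U) (hA_top : μ A ≠ ⊤) (hB_top : μ B ≠ ⊤) (hU₀ : μ U ≠ 0)
    (hABU : A - B ⊆ U) :
    ∃ x : G, μ.real (A \ (x +ᵥ B)) ≤ (1 - μ.real B / μ.real U) * μ.real A := by
  obtain ⟨x, hx⟩ := exists_mul_div_le_covariogram hA hB hU hA_top hB_top hU₀ hABU
  have inter_ge : μ.real A * μ.real B / μ.real U ≤ μ.real (A ∩ (x +ᵥ B)) := by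
    simpa [measureReal_def] using
      ENNReal.toReal_mono (measure_ne_top_of_subset inter_subset_left hA_top) hx
  have inter_add_sdiff := measureReal_inter_add_sdiff (hB.const_vadd x) hA_top
  refine ⟨x, ?_⟩
  calc μ.real (A \ (x +ᵥ B)) ≤ μ.real A - μ.real A * μ.real B / μ.real U := by linarith
    _ = (1 - μ.real B / μ.real U) * μ.real A := by ring

theorem exists_finset_measureReal_sdiff_iUnion_vadd_le (hA : MeasurableSet A)
    (hB : MeasurableSet B) (hU : MeasurableSet U) (hA_top : μ A ≠ ⊤) (hB_top : μ B ≠ ⊤)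
    (hU₀ : μ U ≠ 0) (hABU : A - B ⊆ U) (hBU : μ.real B ≤ μ.real U) (n : ℕ) :
    ∃ T : Finset G, T.card ≤ n ∧
      μ.real (A \ ⋃ x ∈ T, (x +ᵥ B)) ≤ (1 - μ.real B / μ.real U) ^ n * μ.real A := by
  classical
  induction n with
  | zero => exact ⟨∅, by simp⟩
  | succ n ih =>
    obtain ⟨T, hT_card, hT⟩ := ih
    set R := A \ ⋃ x ∈ T, (x +ᵥ B)
    have hR : MeasurableSet R := hA.diff (T.measurableSet_biUnion fun x _ => hB.const_vadd x)
    obtain ⟨x, hx⟩ := exists_measureReal_sdiff_vadd_le hR hB hU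
      (measure_ne_top_of_subset sdiff_subset hA_top) hB_top hU₀
      ((sub_subset_sub_right sdiff_subset).trans hABU)
    refine ⟨insert x T, (T.card_insert_le x).trans (by gcongr), ?_⟩
    calc μ.real (A \ ⋃ y ∈ insert x T, (y +ᵥ B)) = μ.real (R \ (x +ᵥ B)) := by
          rw [Finset.set_biUnion_insert, union_comm, ← sdiff_sdiff]
      _ ≤ (1 - μ.real B / μ.real U) * μ.real R := hx
      _ ≤ (1 - μ.real B / μ.real U) * ((1 - μ.real B / μ.real U) ^ n * μ.real A) := by
          gcongr
          exact sub_nonneg.2 (div_le_one_of_le₀ hBU measureReal_nonneg)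
      _ = (1 - μ.real B / μ.real U) ^ (n + 1) * μ.real A := by ring

end GreedyCovering

section Packing

open MeasureTheory

variable {G : Type*} [AddGroup G] [MeasurableSpace G] [MeasurableAdd G] {μ : Measure G}
  [μ.IsAddLeftInvariant] {S R : Set G}

/-- `Y` is the set of translation vectors of a packing of translates of `S` in `R`. -/
def IsTranslativePacking (S R : Set G) (Y : Finset G) : Prop :=
  (∀ y ∈ Y, y +ᵥ S ⊆ R) ∧ (Y : Set G).PairwiseDisjoint (· +ᵥ S)

theorem IsTranslativePacking.card_mul_measure_le {Y : Finset G} (hY : IsTranslativePacking S R Y)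
    (hS : MeasurableSet S) : Y.card * μ S ≤ μ R :=
  calc Y.card * μ S = ∑ y ∈ Y, μ (y +ᵥ S) := by simp [measure_vadd]
    _ = μ (⋃ y ∈ Y, y +ᵥ S) := (measure_biUnion_finset hY.2 fun y _ => hS.const_vadd y).symm
    _ ≤ μ R := measure_mono (iUnion₂_subset hY.1)

theorem IsTranslativePacking.card_le_measureReal_div {Y : Finset G}
    (hY : IsTranslativePacking S R Y) (hS : MeasurableSet S) (hS₀ : 0 < μ.real S) (hR : μ R ≠ ⊤) :
    (Y.card : ℝ) ≤ μ.real R / μ.real S := by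
  rw [le_div_iff₀ hS₀]
  simpa [measureReal_def] using ENNReal.toReal_mono hR (hY.card_mul_measure_le hS)

theorem exists_isTranslativePacking_forall_not_disjoint (hS : MeasurableSet S) (hS₀ : μ S ≠ 0)
    (hR : μ R ≠ ⊤) : ∃ Y, IsTranslativePacking S R Y ∧
      ∀ x : G, x +ᵥ S ⊆ R → ∃ y ∈ Y, ¬Disjoint (x +ᵥ S) (y +ᵥ S) := by
  classical
  obtain ⟨N, hN⟩ := ENNReal.exists_nat_gt (ENNReal.div_ne_top hR hS₀)
  have card_le {Y : Finset G} (hY : IsTranslativePacking S R Y) : Y.card ≤ N := by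
    have : (Y.card : ENNReal) ≤ μ R / μ S :=
      (ENNReal.le_div_iff_mul_le (.inl hS₀) (.inr hR)).2 (hY.card_mul_measure_le hS)
    exact_mod_cast (this.trans_lt hN).le
  obtain ⟨Y, hY, hY_max⟩ := Set.Finite.exists_maximalFor' Finset.card
    {Y | IsTranslativePacking S R Y}
    ((finite_Iic N).subset (image_subset_iff.2 fun Y hY => card_le hY))
    ⟨∅, by simp [IsTranslativePacking]⟩
  refine ⟨Y, hY, fun x hx => ?_⟩
  by_contra! disjoint
  have x_notMem : x ∉ Y := fun hxY => by
    have : S = ∅ := by simpa using disjoint x hxY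
    simp [this] at hS₀
  have insert_packing : IsTranslativePacking S R (insert x Y) := by
    refine ⟨Finset.forall_mem_insert _ _ _ |>.2 ⟨hx, hY.1⟩, ?_⟩
    rw [Finset.coe_insert]
    exact hY.2.insert fun y hy _ => disjoint y hy
  have := hY_max insert_packing (Finset.card_le_card (Finset.subset_insert x Y))
  rw [Finset.card_insert_of_notMem x_notMem] at this
  omega

end Packing

section RogersShephard

open MeasureTheory Measure ProbabilityTheory Module

theorem lintegral_rpow_mul_one_sub_rpow_eq_beta {a b : ℝ} (ha : 0 < a) (hb : 0 < b) :
    ∫⁻ t in Ioo (0 : ℝ) 1, ENNReal.ofReal (t ^ (a - 1) * (1 - t) ^ (b - 1)) =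
      ENNReal.ofReal (beta a b) := by
  have hbeta := beta_pos ha hb
  have integral_eq_one := lintegral_betaPDF_eq_one ha hb
  simp only [lintegral_betaPDF, mul_assoc, ENNReal.ofReal_mul (one_div_nonneg.2 hbeta.le)]
    at integral_eq_one
  rw [lintegral_const_mul' _ _ ENNReal.ofReal_ne_top, mul_comm] at integral_eq_one
  rw [ENNReal.eq_inv_of_mul_eq_one_left integral_eq_one,
    ← ENNReal.ofReal_inv_of_pos (by positivity), one_div, inv_inv]

theorem natCast_mul_beta_succ {d : ℕ} (hd : d ≠ 0) :
    d * beta d (d + 1) = ((2 * d).choose d : ℝ)⁻¹ := by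
  obtain ⟨k, rfl⟩ := Nat.exists_eq_add_one_of_ne_zero hd
  have hΓ : Real.Gamma ((k + 1 : ℕ) : ℝ) = k.factorial := by
    exact_mod_cast Real.Gamma_nat_eq_factorial k
  have hΓ' : Real.Gamma ((k + 1 : ℕ) + ((k + 1 : ℕ) + 1)) = (2 * (k + 1)).factorial := by
    rw [← Real.Gamma_nat_eq_factorial]
    push_cast
    ring_nf
  rw [beta, hΓ, hΓ', Real.Gamma_nat_eq_factorial,
    Nat.cast_choose ℝ (by omega : k + 1 ≤ 2 * (k + 1)), two_mul, Nat.add_sub_cancel,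
    Nat.factorial_succ k]
  push_cast
  field_simp

variable {E : Type*} [NormedAddCommGroup E] [NormedSpace ℝ E] [MeasurableSpace E] [BorelSpace E]
  [FiniteDimensional ℝ E] {μ : Measure E} [μ.IsAddHaarMeasure] {K D : Set E}

theorem measureReal_smul_of_nonneg {r : ℝ} (hr : 0 ≤ r) (S : Set E) :
    μ.real (r • S) = r ^ finrank ℝ E * μ.real S := by
  simp [measureReal_def, addHaar_smul_of_nonneg μ hr, ENNReal.toReal_ofReal (pow_nonneg hr _)]

theorem measure_le_choose_mul_lintegral_pow [Nontrivial E] {f : E → ℝ} (hf₀ : ∀ x, 0 ≤ f x)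
    (hf : Measurable f) (h : ∀ t ∈ Ioo (0 : ℝ) 1, ∀ x ∈ (1 - t) • D, t ≤ f x) :
    μ D ≤ (2 * finrank ℝ E).choose (finrank ℝ E) *
      ∫⁻ x, ENNReal.ofReal (f x ^ finrank ℝ E) ∂μ := by
  set d := finrank ℝ E
  have hd : 0 < d := finrank_pos
  have smul_le {t : ℝ} (ht : t ∈ Ioo (0 : ℝ) 1) :
      μ D * ENNReal.ofReal (t ^ ((d : ℝ) - 1) * (1 - t) ^ ((d : ℝ) + 1 - 1)) ≤
        μ {x | t ≤ f x} * ENNReal.ofReal (t ^ ((d : ℝ) - 1)) := by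
    have h1t : 0 ≤ 1 - t := sub_nonneg.2 ht.2.le
    calc μ D * ENNReal.ofReal (t ^ ((d : ℝ) - 1) * (1 - t) ^ ((d : ℝ) + 1 - 1))
        = μ ((1 - t) • D) * ENNReal.ofReal (t ^ ((d : ℝ) - 1)) := by
          rw [addHaar_smul_of_nonneg μ h1t, add_sub_cancel_right, Real.rpow_natCast,
            ENNReal.ofReal_mul (Real.rpow_nonneg ht.1.le _)]
          ring
      _ ≤ μ {x | t ≤ f x} * ENNReal.ofReal (t ^ ((d : ℝ) - 1)) := by
          gcongr
          exact h t ht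
  have choose_mul_beta :
      ((2 * d).choose d : ENNReal) * ENNReal.ofReal (d * beta d (d + 1)) = 1 := by
    have choose_pos : (0 : ℝ) < (2 * d).choose d := by
      exact_mod_cast Nat.choose_pos (by omega)
    rw [natCast_mul_beta_succ hd.ne', ENNReal.ofReal_inv_of_pos choose_pos, ENNReal.ofReal_natCast]
    exact ENNReal.mul_inv_cancel (by exact_mod_cast choose_pos.ne') (ENNReal.natCast_ne_top _)
  calc μ D = (2 * d).choose d * (ENNReal.ofReal d * (μ D * ENNReal.ofReal (beta d (d + 1)))) := by
        rw [mul_left_comm _ (μ D), ← ENNReal.ofReal_mul (by positivity), mul_left_comm,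
          choose_mul_beta, mul_one]
    _ = (2 * d).choose d * (ENNReal.ofReal d * ∫⁻ t in Ioo (0 : ℝ) 1,
          μ D * ENNReal.ofReal (t ^ ((d : ℝ) - 1) * (1 - t) ^ ((d : ℝ) + 1 - 1))) := by
        rw [lintegral_const_mul _ (by fun_prop),
          lintegral_rpow_mul_one_sub_rpow_eq_beta (by positivity) (by positivity)]
    _ ≤ (2 * d).choose d * (ENNReal.ofReal d * ∫⁻ t in Ioi (0 : ℝ),
          μ {x | t ≤ f x} * ENNReal.ofReal (t ^ ((d : ℝ) - 1))) := by
        gcongr _ * (_ * ?_)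
        exact (setLIntegral_mono' measurableSet_Ioo fun t ht => smul_le ht).trans
          (lintegral_mono_set Ioo_subset_Ioi_self)
    _ = (2 * d).choose d * ∫⁻ x, ENNReal.ofReal (f x ^ d) ∂μ := by
        rw [← lintegral_rpow_eq_lintegral_meas_le_mul μ (.of_forall hf₀) hf.aemeasurable
          (by positivity : (0 : ℝ) < d)]
        simp only [Real.rpow_natCast]

theorem measure_smul_le_covariogram (hK : Convex ℝ K) {r : ℝ} (hr₀ : 0 ≤ r) (hr₁ : r ≤ 1) {x : E}
    (hx : x ∈ r • (K - K)) : μ ((1 - r) • K) ≤ covariogram μ K K x := by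
  obtain ⟨_, ⟨a, ha, b, hb, rfl⟩, rfl⟩ := hx
  rw [← measure_vadd μ (r • a)]
  refine measure_mono ?_
  rintro _ ⟨_, ⟨k, hk, rfl⟩, rfl⟩
  refine ⟨hK ha hk hr₀ (sub_nonneg.2 hr₁) (by ring), _,
    hK hb hk hr₀ (sub_nonneg.2 hr₁) (by ring), ?_⟩
  simp only [vadd_eq_add, smul_sub]
  abel

theorem measureReal_sub_self_le_choose_mul [Nontrivial E] (hK : Convex ℝ K) (hKc : IsCompact K)
    (hK₀ : μ K ≠ 0) :
    μ.real (K - K) ≤ (2 * finrank ℝ E).choose (finrank ℝ E) * μ.real K := by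
  set d := finrank ℝ E
  have hd : d ≠ 0 := finrank_pos.ne'
  have hK_top : μ K ≠ ⊤ := hKc.measure_ne_top
  let g (x : E) : ENNReal := covariogram μ K K x / μ K
  have g_ne_top (x : E) : g x ≠ ⊤ :=
    ENNReal.div_ne_top (measure_ne_top_of_subset inter_subset_left hK_top) hK₀
  have covariogram_meas := measurable_covariogram (μ := μ) hKc.measurableSet hKc.measurableSet
  have lintegral_g : ∫⁻ x, ENNReal.ofReal (((g x).toReal ^ (d : ℝ)⁻¹) ^ d) ∂μ = μ K := by
    simp only [Real.rpow_inv_natCast_pow ENNReal.toReal_nonneg hd,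
      ENNReal.ofReal_toReal (g_ne_top _)]
    simp only [g, div_eq_mul_inv]
    rw [lintegral_mul_const _ covariogram_meas,
      lintegral_covariogram hKc.measurableSet hKc.measurableSet, mul_assoc,
      ENNReal.mul_inv_cancel hK₀ hK_top, mul_one]
  have le_root : ∀ t ∈ Ioo (0 : ℝ) 1, ∀ x ∈ (1 - t) • (K - K), t ≤ (g x).toReal ^ (d : ℝ)⁻¹ := by
    intro t ht x hx
    have := measure_smul_le_covariogram (μ := μ) hK (sub_nonneg.2 ht.2.le)
      (sub_le_self 1 ht.1.le) hx
    rw [sub_sub_cancel, addHaar_smul_of_nonneg μ ht.1.le] at this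
    rw [Real.le_rpow_inv_iff_of_pos ht.1.le ENNReal.toReal_nonneg (by positivity),
      Real.rpow_natCast, ← ENNReal.ofReal_le_iff_le_toReal (g_ne_top x)]
    exact (ENNReal.le_div_iff_mul_le (.inl hK₀) (.inl hK_top)).2 this
  have := measure_le_choose_mul_lintegral_pow (μ := μ)
    (fun x => Real.rpow_nonneg ENNReal.toReal_nonneg _) (by fun_prop) le_root
  rw [lintegral_g] at this
  simpa [measureReal_def] using ENNReal.toReal_mono (by finiteness) this

end RogersShephard

section DifferenceBody

open MeasureTheory Measure Module

variable {E : Type*} [NormedAddCommGroup E] [NormedSpace ℝ E] {K : Set E}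

theorem sub_smul_add_one_sub_smul_neg_subset (hK : Convex ℝ K) {r : ℝ} (hr₀ : 0 ≤ r)
    (hr₁ : r ≤ 1) : K - r • K + (1 - r) • -K ⊆ K - K := by
  rw [sub_eq_add_neg K, ← smul_set_neg, add_assoc, ← hK.neg.add_smul hr₀ (sub_nonneg.2 hr₁),
    add_sub_cancel, one_smul, ← sub_eq_add_neg]

theorem isCompact_sub_smul {L : Set E} (hK : IsCompact K) (hL : IsCompact L) (r : ℝ) :
    IsCompact (K - r • L) := by
  simpa [sub_eq_add_neg] using hK.add (hL.smul r).neg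

theorem IsConvexBody.nonempty (hK : IsConvexBody K) : K.Nonempty := hK.2.2.mono interior_subset

variable [MeasurableSpace E] {μ : Measure E} [μ.IsAddHaarMeasure]

theorem IsConvexBody.measure_ne_zero (hK : IsConvexBody K) : μ K ≠ 0 :=
  (measure_pos_of_nonempty_interior μ hK.2.2).ne'

theorem IsConvexBody.measureReal_pos (hK : IsConvexBody K) : 0 < μ.real K :=
  ENNReal.toReal_pos hK.measure_ne_zero hK.1.measure_ne_top

variable [BorelSpace E] [FiniteDimensional ℝ E]

theorem measureReal_sub_smul_of_eq_neg (hK : Convex ℝ K) (hK_neg : K = -K) {r : ℝ} (hr : 0 ≤ r) :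
    μ.real (K - r • K) = (1 + r) ^ finrank ℝ E * μ.real K := by
  rw [sub_eq_add_neg, ← smul_set_neg, ← hK_neg, ← measureReal_smul_of_nonneg (by positivity),
    hK.add_smul zero_le_one hr, one_smul]

theorem measureReal_smul_rpow_inv_finrank [Nontrivial E] {r : ℝ} (hr : 0 ≤ r) (S : Set E) :
    μ.real (r • S) ^ (finrank ℝ E : ℝ)⁻¹ = r * μ.real S ^ (finrank ℝ E : ℝ)⁻¹ := by
  rw [measureReal_smul_of_nonneg hr, Real.mul_rpow (by positivity) (by positivity),
    Real.pow_rpow_inv_natCast hr finrank_pos.ne']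

theorem IsConvexBody.measureReal_sub_smul_rpow_le [Nontrivial E] (hK : IsConvexBody K) {r : ℝ}
    (hr₀ : 0 ≤ r) (hr₁ : r ≤ 1) :
    μ.real (K - r • K) ^ (finrank ℝ E : ℝ)⁻¹ ≤
      (((2 * finrank ℝ E).choose (finrank ℝ E) : ℝ) ^ (finrank ℝ E : ℝ)⁻¹ - 1 + r) *
        μ.real K ^ (finrank ℝ E : ℝ)⁻¹ := by
  set d := finrank ℝ E
  have diff_compact : IsCompact (K - K) := by simpa using isCompact_sub_smul hK.1 hK.1 1
  suffices μ.real (K - r • K) ^ (d : ℝ)⁻¹ + (1 - r) * μ.real K ^ (d : ℝ)⁻¹ ≤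
      ((2 * d).choose d : ℝ) ^ (d : ℝ)⁻¹ * μ.real K ^ (d : ℝ)⁻¹ by linarith
  calc μ.real (K - r • K) ^ (d : ℝ)⁻¹ + (1 - r) * μ.real K ^ (d : ℝ)⁻¹
      = μ.real (K - r • K) ^ (d : ℝ)⁻¹ + μ.real ((1 - r) • -K) ^ (d : ℝ)⁻¹ := by
        rw [measureReal_smul_rpow_inv_finrank (sub_nonneg.2 hr₁), measureReal_def μ (-K),
          measure_neg, ← measureReal_def]
    _ ≤ μ.real (K - r • K + (1 - r) • -K) ^ (d : ℝ)⁻¹ :=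
        measureReal_rpow_add_measureReal_rpow_le (isCompact_sub_smul hK.1 hK.1 r)
          (hK.1.neg.smul _) (hK.nonempty.sub hK.nonempty.smul_set) hK.nonempty.neg.smul_set
    _ ≤ μ.real (K - K) ^ (d : ℝ)⁻¹ := by
        gcongr
        · exact diff_compact.measure_ne_top
        · exact sub_smul_add_one_sub_smul_neg_subset hK.2.1 hr₀ hr₁
    _ ≤ ((2 * d).choose d * μ.real K) ^ (d : ℝ)⁻¹ := by
        gcongr
        exact measureReal_sub_self_le_choose_mul hK.2.1 hK.1 hK.measure_ne_zero
    _ = ((2 * d).choose d : ℝ) ^ (d : ℝ)⁻¹ * μ.real K ^ (d : ℝ)⁻¹ :=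
        Real.mul_rpow (by positivity) (by positivity)

theorem IsConvexBody.measureReal_sub_smul_le [Nontrivial E] (hK : IsConvexBody K) {r : ℝ}
    (hr₀ : 0 ≤ r) (hr₁ : r ≤ 1) :
    μ.real (K - r • K) ≤
      (((2 * finrank ℝ E).choose (finrank ℝ E) : ℝ) ^ (finrank ℝ E : ℝ)⁻¹ - 1 + r) ^ finrank ℝ E *
        μ.real K := by
  have := pow_le_pow_left₀ (by positivity) (hK.measureReal_sub_smul_rpow_le (μ := μ) hr₀ hr₁)
    (finrank ℝ E)
  rwa [mul_pow, Real.rpow_inv_natCast_pow measureReal_nonneg finrank_pos.ne',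
    Real.rpow_inv_natCast_pow measureReal_nonneg finrank_pos.ne'] at this

end DifferenceBody

section Reflection

open Module

theorem exists_forall_sub_smul_mem {E : Type*} [AddCommGroup E] [Module ℝ E] [TopologicalSpace E]
    [ContinuousAdd E] [T2Space E] [FiniteDimensional ℝ E] {K : Set E} (hK : Convex ℝ K)
    (hKc : IsCompact K) {r : ℝ} (hr₀ : 0 ≤ r) (hr : r * finrank ℝ E ≤ 1) :
    ∃ c, ∀ x ∈ K, c - r • x ∈ K := by
  classical
  suffices (⋂ x : K, ((r • (x : E)) +ᵥ K)).Nonempty by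
    obtain ⟨c, hc⟩ := this
    refine ⟨c, fun x hx => ?_⟩
    simpa [mem_vadd_set_iff_neg_vadd_mem, neg_add_eq_sub] using mem_iInter.1 hc ⟨x, hx⟩
  refine Convex.helly_theorem_compact' (𝕜 := ℝ) (fun x => hK.vadd _) (fun x => hKc.vadd _) ?_
  intro I hI
  obtain rfl | hI₀ := I.eq_empty_or_nonempty
  · simp
  have card_pos : (0 : ℝ) < I.card := by exact_mod_cast hI₀.card_pos
  have card_mul_le : r * I.card ≤ 1 + r := by
    have : (I.card : ℝ) ≤ finrank ℝ E + 1 := by exact_mod_cast hI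
    nlinarith
  -- This point minus `r • j` is the average of `I` with the weight `r` moved off `j`.
  refine ⟨∑ i ∈ I, ((1 + r) / I.card) • (i : E), mem_iInter₂.2 fun j hj => ?_⟩
  have weights : -(r • (j : E)) + ∑ i ∈ I, ((1 + r) / I.card) • (i : E) =
      ∑ i ∈ I, ((1 + r) / I.card - if i = j then r else 0) • (i : E) := by
    simp [sub_smul, ite_smul, Finset.sum_sub_distrib, hj, neg_add_eq_sub]
  rw [mem_vadd_set_iff_neg_vadd_mem, vadd_eq_add, weights]
  refine hK.sum_mem (fun i _ => ?_) ?_ fun i _ => i.2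
  · have : r ≤ (1 + r) / I.card := (le_div_iff₀ card_pos).2 card_mul_le
    split_ifs <;> linarith
  · rw [Finset.sum_sub_distrib]
    simp only [Finset.sum_const, nsmul_eq_mul, Finset.sum_ite_eq', hj, if_true]
    rw [mul_div_cancel₀ _ card_pos.ne', add_sub_cancel_right]

end Reflection

section GreedyLength

theorem exists_natCast_add_one_sub_pow_div_le {q ε : ℝ} (hq₀ : 0 < q) (hq₁ : q ≤ 1) (hε₀ : 0 < ε)
    (hε₁ : ε ≤ 1) : ∃ n : ℕ, n + (1 - q) ^ n / (ε * q) ≤ (2 + Real.log ε⁻¹) / q := by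
  have log_nonneg : 0 ≤ Real.log ε⁻¹ := Real.log_nonneg ((one_le_inv₀ hε₀).2 hε₁)
  set n := ⌈Real.log ε⁻¹ / q⌉₊
  have pow_le : (1 - q) ^ n ≤ ε :=
    calc (1 - q) ^ n ≤ Real.exp (-q) ^ n :=
          pow_le_pow_left₀ (sub_nonneg.2 hq₁) (Real.one_sub_le_exp_neg q) n
      _ = Real.exp (-(n * q)) := by rw [← Real.exp_nat_mul, mul_neg]
      _ ≤ Real.exp (-Real.log ε⁻¹) := by
          gcongr
          exact (div_le_iff₀ hq₀).1 (Nat.le_ceil _)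
      _ = ε := by rw [Real.log_inv, neg_neg, Real.exp_log hε₀]
  refine ⟨n, ?_⟩
  calc (n : ℝ) + (1 - q) ^ n / (ε * q) ≤ (Real.log ε⁻¹ / q + 1) + ε / (ε * q) := by
        gcongr
        exact (Nat.ceil_lt_add_one (by positivity)).le
    _ = Real.log ε⁻¹ / q + 1 + 1 / q := by rw [← div_div, div_self hε₀.ne']
    _ ≤ Real.log ε⁻¹ / q + 1 / q + 1 / q := by
        gcongr
        exact (one_le_div hq₀).2 hq₁
    _ = (2 + Real.log ε⁻¹) / q := by ring

end GreedyLength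

section RogersZong

open MeasureTheory Measure Module

-- If `p - η • L` meets some `x + L` with `x ∈ X`, then `p ∈ x + (1 + η) • L`; otherwise it meets
-- some `y - η • L` with `y ∈ Y`, and then `p ∈ y - η • L + η • L ⊆ (y - c) + (1 + η) • L`.
theorem subset_iUnion_vadd_one_add_smul {E : Type*} [AddCommGroup E] [Module ℝ E] [DecidableEq E]
    {K L : Set E} (hL : Convex ℝ L) {η : ℝ} (hη : 0 ≤ η) {c : E} (hc : ∀ x ∈ L, c - η • x ∈ L)
    {X Y : Finset E}
    (hY : ∀ p : E, p +ᵥ -(η • L) ⊆ (K - η • L) \ ⋃ x ∈ X, (x +ᵥ L) →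
      ∃ y ∈ Y, ¬Disjoint (p +ᵥ -(η • L)) (y +ᵥ -(η • L))) :
    K ⊆ ⋃ t ∈ X ∪ Y.image (· - c), (t +ᵥ (1 + η) • L) := by
  have mem_one_add_smul {l l' : E} (hl : l ∈ L) (hl' : l' ∈ L) : l + η • l' ∈ (1 + η) • L := by
    rw [hL.add_smul zero_le_one hη, one_smul]
    exact add_mem_add hl (smul_mem_smul_set hl')
  have exists_eq_add_smul {p z : E} (hz : z ∈ p +ᵥ -(η • L)) : ∃ l ∈ L, p = z + η • l := by
    obtain ⟨u, ⟨l, hl, hlu : η • l = -u⟩, rfl : p + u = z⟩ := hz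
    exact ⟨l, hl, by rw [hlu, add_neg_cancel_right]⟩
  intro p hp
  by_cases p_subset : p +ᵥ -(η • L) ⊆ (K - η • L) \ ⋃ x ∈ X, (x +ᵥ L)
  · obtain ⟨y, hy, not_disjoint⟩ := hY p p_subset
    obtain ⟨z, hzp, hzy⟩ := not_disjoint_iff.1 not_disjoint
    obtain ⟨l, hl, rfl⟩ := exists_eq_add_smul hzp
    obtain ⟨l', hl', rfl⟩ := exists_eq_add_smul hzy
    refine mem_biUnion (Finset.mem_union_right _ (Finset.mem_image_of_mem _ hy))
      ⟨_, mem_one_add_smul (hc l' hl') hl, ?_⟩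
    simp only [vadd_eq_add]
    abel
  · obtain ⟨z, hzp, hz⟩ := not_subset.1 p_subset
    obtain ⟨l, hl, rfl⟩ := exists_eq_add_smul hzp
    have z_mem : z ∈ K - η • L := ⟨_, hp, _, smul_mem_smul_set hl, add_sub_cancel_right z _⟩
    obtain ⟨x, hx, u, hu, rfl : x + u = z⟩ := mem_iUnion₂.1 (not_not.1 fun h => hz ⟨z_mem, h⟩)
    refine mem_biUnion (Finset.mem_union_left _ hx) ⟨_, mem_one_add_smul hu hl, ?_⟩
    simp only [vadd_eq_add, add_assoc]

variable {E : Type*} [NormedAddCommGroup E] [NormedSpace ℝ E] {K L : Set E}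

theorem sub_one_add_smul_eq (hL : Convex ℝ L) {η : ℝ} (hη : 0 ≤ η) :
    K - (1 + η) • L = K - η • L - L := by
  rw [sub_sub, add_comm (η • L), hL.add_smul zero_le_one hη, one_smul]

variable [MeasurableSpace E] [BorelSpace E] [FiniteDimensional ℝ E] {μ : Measure E}
  [μ.IsAddHaarMeasure]

theorem exists_finset_card_le_card_add_subset_iUnion_vadd (hK : IsCompact K) (hL : IsConvexBody L)
    {η : ℝ} (hη₀ : 0 < η) (hη : η * finrank ℝ E ≤ 1) (X : Finset E) :
    ∃ T : Finset E, K ⊆ ⋃ t ∈ T, (t +ᵥ (1 + η) • L) ∧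
      (T.card : ℝ) ≤ X.card + μ.real ((K - η • L) \ ⋃ x ∈ X, (x +ᵥ L)) /
        (η ^ finrank ℝ E * μ.real L) := by
  classical
  set R := (K - η • L) \ ⋃ x ∈ X, (x +ᵥ L)
  have hR : μ R ≠ ⊤ :=
    measure_ne_top_of_subset sdiff_subset (isCompact_sub_smul hK hL.1 η).measure_ne_top
  have hS : MeasurableSet (-(η • L)) := (hL.1.smul η).neg.measurableSet
  have measure_S : μ.real (-(η • L)) = η ^ finrank ℝ E * μ.real L := by
    rw [measureReal_def, measure_neg, ← measureReal_def, measureReal_smul_of_nonneg hη₀.le]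
  have hS₀ : 0 < μ.real (-(η • L)) := by
    have := hL.measureReal_pos (μ := μ)
    rw [measure_S]
    positivity
  obtain ⟨c, hc⟩ := exists_forall_sub_smul_mem hL.2.1 hL.1 hη₀.le hη
  obtain ⟨Y, hY, hY_max⟩ := exists_isTranslativePacking_forall_not_disjoint hS
    (ENNReal.toReal_pos_iff.1 hS₀).1.ne' hR
  refine ⟨X ∪ Y.image (· - c), subset_iUnion_vadd_one_add_smul hL.2.1 hη₀.le hc hY_max, ?_⟩
  calc ((X ∪ Y.image (· - c)).card : ℝ) ≤ X.card + Y.card := by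
        exact_mod_cast (Finset.card_union_le _ _).trans
          (Nat.add_le_add_left Finset.card_image_le _)
    _ ≤ X.card + μ.real R / (η ^ finrank ℝ E * μ.real L) := by
        gcongr
        exact measure_S ▸ hY.card_le_measureReal_div hS hS₀ hR

theorem exists_finset_card_le_mul_two_add_log (hK : IsCompact K) (hK₀ : K.Nonempty)
    (hL : IsConvexBody L) {η : ℝ} (hη₀ : 0 < η) (hη₁ : η ≤ 1) (hη : η * finrank ℝ E ≤ 1) :
    ∃ T : Finset E, K ⊆ ⋃ t ∈ T, (t +ᵥ (1 + η) • L) ∧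
      (T.card : ℝ) ≤ μ.real (K - (1 + η) • L) / μ.real L *
        (2 + finrank ℝ E * Real.log η⁻¹) := by
  set d := finrank ℝ E
  set D := K - η • L
  rw [sub_one_add_smul_eq hL.2.1 hη₀.le]
  have hD : IsCompact D := isCompact_sub_smul hK hL.1 η
  have hDL : IsCompact (D - L) := by simpa using isCompact_sub_smul hD hL.1 1
  have D_le : μ.real D ≤ μ.real (D - L) := measureReal_le_measureReal_sub_left hD hL.1 hL.nonempty
  have L_le : μ.real L ≤ μ.real (D - L) :=
    measureReal_le_measureReal_sub_right hD hL.1 (hK₀.sub hL.nonempty.smul_set)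
  have hL₀ := hL.measureReal_pos (μ := μ)
  have hDL₀ : 0 < μ.real (D - L) := hL₀.trans_le L_le
  set q := μ.real L / μ.real (D - L) with hq
  have hq₁ : q ≤ 1 := (div_le_one hDL₀).2 L_le
  obtain ⟨n, hn⟩ := exists_natCast_add_one_sub_pow_div_le (div_pos hL₀ hDL₀) hq₁
    (pow_pos hη₀ d) (pow_le_one₀ hη₀.le hη₁)
  obtain ⟨X, X_card, hX⟩ := exists_finset_measureReal_sdiff_iUnion_vadd_le
    hD.measurableSet hL.1.measurableSet hDL.measurableSet hD.measure_ne_top hL.1.measure_ne_top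
    (ENNReal.toReal_pos_iff.1 hDL₀).1.ne' Subset.rfl L_le n
  obtain ⟨T, hT, T_card⟩ :=
    exists_finset_card_le_card_add_subset_iUnion_vadd (μ := μ) hK hL hη₀ hη X
  refine ⟨T, hT, T_card.trans ?_⟩
  have residual_le : μ.real (D \ ⋃ x ∈ X, (x +ᵥ L)) ≤ (1 - q) ^ n * μ.real (D - L) :=
    hX.trans (mul_le_mul_of_nonneg_left D_le (pow_nonneg (sub_nonneg.2 hq₁) n))
  calc X.card + μ.real (D \ ⋃ x ∈ X, (x +ᵥ L)) / (η ^ d * μ.real L)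
      ≤ n + (1 - q) ^ n * μ.real (D - L) / (η ^ d * μ.real L) := by gcongr
    _ = n + (1 - q) ^ n / (η ^ d * q) := by
        rw [hq]
        field_simp
    _ ≤ (2 + Real.log (η ^ d)⁻¹) / q := hn
    _ = μ.real (D - L) / μ.real L * (2 + d * Real.log η⁻¹) := by
        rw [← inv_pow, Real.log_pow, div_eq_inv_mul, inv_div]

end RogersZong

section RogersDensityBound

/-- Rogers' bound `d (log d + log log d + 5)` for the density of a thinnest covering of `ℝ ^ d` by
translates of a convex body; meaningful for `d ≥ 2` only, as `Real.log 0 = 0` enters below that. -/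
noncomputable def rogersDensityBound (d : ℕ) : ℝ :=
  d * (Real.log d + Real.log (Real.log d) + 5)

theorem exists_one_add_pow_two_mul_le :
    ∃ η : ℝ, 0 < η ∧ η * (2 : ℕ) ≤ 1 ∧
      (1 + η) ^ 2 * (2 + (2 : ℕ) * Real.log η⁻¹) ≤ rogersDensityBound 2 := by
  have log_two_gt := Real.log_two_gt_d9
  have log_two_lt := Real.log_two_lt_d9
  have inv_log_two_le : (Real.log 2)⁻¹ ≤ 3 / 2 := by
    rw [inv_le_comm₀ (by positivity) (by norm_num)]
    norm_num
    linarith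
  have log_log_two_ge := Real.one_sub_inv_le_log_of_pos (by positivity : 0 < Real.log 2)
  refine ⟨1 / 2, by norm_num, by norm_num, ?_⟩
  norm_num [rogersDensityBound]
  linarith

theorem one_add_inv_mul_pow_le {d : ℕ} {l : ℝ} (hd : d ≠ 0) (hl : 1 ≤ l) :
    (1 + (d * l)⁻¹) ^ d ≤ 1 + l⁻¹ + l⁻¹ ^ 2 := by
  have inv_le_one : |l⁻¹| ≤ 1 := by
    rw [abs_of_pos (by positivity)]
    exact inv_le_one_of_one_le₀ hl
  calc (1 + (d * l)⁻¹) ^ d ≤ Real.exp (d * l)⁻¹ ^ d := by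
        gcongr
        linarith [Real.add_one_le_exp (d * l)⁻¹]
    _ = Real.exp l⁻¹ := by
        rw [← Real.exp_nat_mul, mul_inv, mul_inv_cancel_left₀ (by exact_mod_cast hd)]
    _ ≤ 1 + l⁻¹ + l⁻¹ ^ 2 := by
        linarith [(abs_le.1 (Real.abs_exp_sub_one_sub_id_le inv_le_one)).2]

theorem inv_add_inv_sq_mul_add_log_le {l : ℝ} (hl : 1 ≤ l) :
    (l⁻¹ + l⁻¹ ^ 2) * (l + Real.log l) ≤ 3 := by
  have inv_mul_le : l⁻¹ * (l + Real.log l) ≤ 2 - l⁻¹ :=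
    calc l⁻¹ * (l + Real.log l) ≤ l⁻¹ * (l + (l - 1)) := by
          gcongr
          exact Real.log_le_sub_one_of_pos (by positivity)
      _ = 2 - l⁻¹ := by
          field_simp
          ring
  calc (l⁻¹ + l⁻¹ ^ 2) * (l + Real.log l) = (1 + l⁻¹) * (l⁻¹ * (l + Real.log l)) := by ring
    _ ≤ (1 + l⁻¹) * (2 - l⁻¹) := by gcongr
    _ ≤ 3 := by nlinarith [sq_nonneg (l⁻¹ - 1 / 2)]

theorem exists_one_add_pow_mul_le_of_three_le {d : ℕ} (hd : 3 ≤ d) :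
    ∃ η : ℝ, 0 < η ∧ η * d ≤ 1 ∧
      (1 + η) ^ d * (2 + d * Real.log η⁻¹) ≤ rogersDensityBound d := by
  have hd' : (3 : ℝ) ≤ d := by exact_mod_cast hd
  set l := Real.log d
  have hl : 1 ≤ l := by
    rw [Real.le_log_iff_exp_le (by linarith)]
    linarith [Real.exp_one_lt_d9]
  have excess_le := inv_add_inv_sq_mul_add_log_le hl
  set u := l⁻¹
  have hu₀ : 0 < u := by positivity
  have hu₁ : u ≤ 1 := inv_le_one_of_one_le₀ hl
  set m := Real.log l
  have hm₀ : 0 ≤ m := Real.log_nonneg hl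
  refine ⟨(d * l)⁻¹, by positivity, ?_, ?_⟩
  · rw [mul_inv, mul_right_comm, inv_mul_cancel₀ (by positivity), one_mul]
    exact hu₁
  calc (1 + (d * l)⁻¹) ^ d * (2 + d * Real.log (d * l)⁻¹⁻¹)
      = (1 + (d * l)⁻¹) ^ d * (2 + d * (l + m)) := by
        rw [inv_inv, Real.log_mul (by positivity) (by positivity)]
    _ ≤ (1 + u + u ^ 2) * (2 + d * (l + m)) := by
        gcongr
        exact one_add_inv_mul_pow_le (by omega) hl
    _ = 2 * (1 + u + u ^ 2) + d * ((u + u ^ 2) * (l + m)) + d * (l + m) := by ring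
    _ ≤ 2 * d + d * 3 + d * (l + m) := by
        gcongr
        nlinarith
    _ = rogersDensityBound d := by
        rw [rogersDensityBound]
        ring

theorem exists_one_add_pow_mul_le {d : ℕ} (hd : 2 ≤ d) :
    ∃ η : ℝ, 0 < η ∧ η * d ≤ 1 ∧
      (1 + η) ^ d * (2 + d * Real.log η⁻¹) ≤ rogersDensityBound d := by
  obtain rfl | hd := hd.eq_or_lt
  · exact exists_one_add_pow_two_mul_le
  · exact exists_one_add_pow_mul_le_of_three_le hd

theorem rogersDensityBound_nonneg {d : ℕ} (hd : 2 ≤ d) : 0 ≤ rogersDensityBound d := by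
  obtain ⟨η, hη₀, hη, le_bound⟩ := exists_one_add_pow_mul_le hd
  have one_le_d : (1 : ℝ) ≤ d := by exact_mod_cast one_le_two.trans hd
  have : 0 ≤ Real.log η⁻¹ := Real.log_nonneg ((one_le_inv₀ hη₀).2 (by nlinarith))
  exact le_trans (by positivity) le_bound

end RogersDensityBound

section CoveringNumber

open MeasureTheory Measure Module

variable {E : Type*} [NormedAddCommGroup E] [NormedSpace ℝ E] {K L : Set E} {r : ℝ} {m : ℕ}

theorem IsConvexBody.smul (hK : IsConvexBody K) (hr : r ≠ 0) : IsConvexBody (r • K) :=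
  ⟨hK.1.smul r, hK.2.1.smul r, by simpa [interior_smul₀ hr] using hK.2.2⟩

theorem coversWith_card {T : Finset E} (hT : K ⊆ ⋃ t ∈ T, (t +ᵥ r • K)) :
    CoversWith K r T.card := by
  refine ⟨fun i => T.equivFin.symm i, fun x hx => ?_⟩
  obtain ⟨t, ht, _, ⟨y, hy, rfl⟩, rfl⟩ := mem_iUnion₂.1 (hT hx)
  exact mem_iUnion.2 ⟨T.equivFin ⟨t, ht⟩, y, hy, by simp [add_comm]⟩

theorem covN_le (h : CoversWith K r m) : covN r K ≤ m := Nat.sInf_le h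

theorem IsConvexBody.coversWith_covN (hK : IsConvexBody K) (hr : r ≠ 0) :
    CoversWith K r (covN r K) := by
  classical
  obtain ⟨T, hT⟩ := compact_covered_by_add_left_translates hK.1 (hK.smul hr).2.2
  refine Nat.sInf_mem (s := {n | CoversWith K r n})
    ⟨_, coversWith_card (T := T.image Neg.neg) fun x hx => ?_⟩
  simpa [mem_vadd_set_iff_neg_vadd_mem] using hT hx

theorem CoversWith.pos (h : CoversWith K r m) (hK : K.Nonempty) : 0 < m := by
  obtain ⟨t, ht⟩ := h
  obtain ⟨x, hx⟩ := hK
  obtain ⟨i, -⟩ := mem_iUnion.1 (ht hx)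
  exact i.pos

theorem gammaC_le (h : CoversWith K r m) (hr : 0 < r) : gammaC m K ≤ r :=
  csInf_le ⟨0, fun _ hs => hs.1.le⟩ ⟨hr, h⟩

theorem wcoin_le_div_one_sub_gammaC (hm : 0 < m) (h : gammaC m K < 1) :
    wcoin K ≤ m / (1 - gammaC m K) := by
  refine csInf_le ⟨0, ?_⟩ ⟨m, hm, h, rfl⟩
  rintro _ ⟨n, -, hn, rfl⟩
  exact div_nonneg n.cast_nonneg (sub_nonneg.2 hn.le)

theorem CoversWith.wcoin_le_div (h : CoversWith K r m) (hK : K.Nonempty) (hr₀ : 0 < r)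
    (hr₁ : r < 1) : wcoin K ≤ m / (1 - r) :=
  have gammaC_le_r := gammaC_le h hr₀
  (wcoin_le_div_one_sub_gammaC (h.pos hK) (gammaC_le_r.trans_lt hr₁)).trans
    (div_le_div_of_nonneg_left m.cast_nonneg (sub_pos.2 hr₁) (sub_le_sub_left gammaC_le_r 1))

variable [MeasurableSpace E] [BorelSpace E] [FiniteDimensional ℝ E] {μ : Measure E}
  [μ.IsAddHaarMeasure]

theorem exists_finset_card_le_mul_rogersDensityBound (hd : 2 ≤ finrank ℝ E) (hK : IsCompact K)
    (hK₀ : K.Nonempty) (hL : IsConvexBody L) :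
    ∃ T : Finset E, K ⊆ ⋃ t ∈ T, (t +ᵥ L) ∧
      (T.card : ℝ) ≤ μ.real (K - L) / μ.real L * rogersDensityBound (finrank ℝ E) := by
  set d := finrank ℝ E
  obtain ⟨η, hη₀, hη, le_bound⟩ := exists_one_add_pow_mul_le hd
  have one_le_d : (1 : ℝ) ≤ d := by exact_mod_cast one_le_two.trans hd
  have hη₂ : 1 + η ≠ 0 := by positivity
  have body : IsConvexBody ((1 + η)⁻¹ • L) := hL.smul (inv_ne_zero hη₂)
  obtain ⟨T, hT, T_card⟩ := exists_finset_card_le_mul_two_add_log (μ := μ) hK hK₀ body hη₀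
    (by nlinarith) hη
  rw [smul_inv_smul₀ hη₂] at hT T_card
  refine ⟨T, hT, T_card.trans ?_⟩
  calc μ.real (K - L) / μ.real ((1 + η)⁻¹ • L) * (2 + d * Real.log η⁻¹)
      = μ.real (K - L) / μ.real L * ((1 + η) ^ d * (2 + d * Real.log η⁻¹)) := by
        rw [measureReal_smul_of_nonneg (by positivity), inv_pow, show finrank ℝ E = d from rfl]
        field_simp
    _ ≤ μ.real (K - L) / μ.real L * rogersDensityBound d := by gcongr

theorem IsConvexBody.covN_le_mul_rogersDensityBound (hd : 2 ≤ finrank ℝ E) (hK : IsConvexBody K)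
    (hr : 0 < r) :
    (covN r K : ℝ) ≤ μ.real (K - r • K) / (r ^ finrank ℝ E * μ.real K) *
      rogersDensityBound (finrank ℝ E) := by
  obtain ⟨T, hT, T_card⟩ := exists_finset_card_le_mul_rogersDensityBound (μ := μ) hd hK.1
    hK.nonempty (hK.smul hr.ne')
  rw [measureReal_smul_of_nonneg hr.le] at T_card
  exact (Nat.cast_le.2 (covN_le (coversWith_card hT))).trans T_card

theorem IsConvexBody.covN_div_le (hd : 2 ≤ finrank ℝ E) (hK : IsConvexBody K) (hr₀ : 0 < r)
    (hr₁ : r < 1) {M : ℝ} (hM : μ.real (K - r • K) ≤ M * μ.real K) :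
    (covN r K : ℝ) / (1 - r) ≤
      1 / (r ^ finrank ℝ E * (1 - r)) * M * rogersDensityBound (finrank ℝ E) := by
  have hK₀ := hK.measureReal_pos (μ := μ)
  have bound_nonneg := rogersDensityBound_nonneg hd
  have h1r : 0 < 1 - r := sub_pos.2 hr₁
  rw [div_le_iff₀ h1r]
  calc (covN r K : ℝ) ≤ M * μ.real K / (r ^ finrank ℝ E * μ.real K) *
        rogersDensityBound (finrank ℝ E) := by
        refine (hK.covN_le_mul_rogersDensityBound (μ := μ) hd hr₀).trans ?_
        gcongr
    _ = 1 / (r ^ finrank ℝ E * (1 - r)) * M * rogersDensityBound (finrank ℝ E) * (1 - r) := by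
        field_simp

end CoveringNumber

open Module in
theorem wcoin_upper_bounds_general {E : Type*} [NormedAddCommGroup E] [NormedSpace ℝ E]
    (hd : 2 ≤ finrank ℝ E) {K : Set E} (hK : IsConvexBody K) {lam : ℝ} (h0 : 0 < lam)
    (h1 : lam < 1) :
    wcoin K ≤ (covN lam K : ℝ) / (1 - lam) ∧
    (K = -K →
      (covN lam K : ℝ) / (1 - lam) ≤
        (1 + lam) ^ finrank ℝ E / (lam ^ finrank ℝ E * (1 - lam)) * finrank ℝ E *
          (Real.log (finrank ℝ E) + Real.log (Real.log (finrank ℝ E)) + 5)) ∧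
    (covN lam K : ℝ) / (1 - lam) ≤
      1 / (lam ^ finrank ℝ E * (1 - lam)) *
        (((2 * finrank ℝ E).choose (finrank ℝ E) : ℝ) ^ ((1 : ℝ) / finrank ℝ E) - 1 + lam) ^
          finrank ℝ E * finrank ℝ E *
          (Real.log (finrank ℝ E) + Real.log (Real.log (finrank ℝ E)) + 5) := by
  have : FiniteDimensional ℝ E := .of_finrank_pos (by omega)
  have : Nontrivial E := nontrivial_of_finrank_pos (R := ℝ) (by omega)
  borelize E
  let μ : MeasureTheory.Measure E := MeasureTheory.Measure.addHaar
  refine ⟨(hK.coversWith_covN h0.ne').wcoin_le_div hK.nonempty h0 h1, fun hK_neg => ?_, ?_⟩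
  · refine (hK.covN_div_le (μ := μ) hd h0 h1
      (measureReal_sub_smul_of_eq_neg hK.2.1 hK_neg h0.le).le).trans_eq ?_
    rw [rogersDensityBound]
    ring
  · refine (hK.covN_div_le (μ := μ) hd h0 h1 (hK.measureReal_sub_smul_le h0.le h1.le)).trans_eq ?_
    rw [rogersDensityBound, one_div (finrank ℝ E : ℝ)]
    ring

/-- Rogers-type upper bounds on the weak covering index. -/
theorem wcoin_upper_bounds (d : ℕ) (hd : 2 ≤ d) (K : Set (Fin d → ℝ))
    (hK : IsConvexBody K) (lam : ℝ) (h0 : 0 < lam) (h1 : lam < 1) :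
    wcoin K ≤ (covN lam K : ℝ) / (1 - lam) ∧
    (K = -K →
      (covN lam K : ℝ) / (1 - lam) ≤
        (1 + lam) ^ d / (lam ^ d * (1 - lam)) * d *
          (Real.log d + Real.log (Real.log d) + 5)) ∧
    (covN lam K : ℝ) / (1 - lam) ≤
      1 / (lam ^ d * (1 - lam)) *
        (((Nat.choose (2 * d) d : ℝ) ^ ((1 : ℝ) / d) - 1 + lam) ^ d) * d *
          (Real.log d + Real.log (Real.log d) + 5) := by
  simpa only [Module.finrank_fin_fun] using
    wcoin_upper_bounds_general (hd.trans_eq (Module.finrank_fin_fun ℝ).symm) hK h0 h1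
end
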